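/- arXiv:2105.02053 — 4 statements merged into one kernel-verified Lean document; each statement's English description precedes it below -/
import Mathlib

section
/- Let μ_m > 0. There exists k₀ > 0 (depending on μ_m, m and V_s) such that for every real k ≥ k₀, every μ ∈ ℂ with Im μ ≥ μ_m, and every pair of functions A ∈ C¹([0,∞),ℂ) and φ ∈ C²([0,∞),ℂ) with A' ∈ L²(ρ), φ, φ', φ'' ∈ L²(ρ), φ(0) = 0, φ(z) → 0 as z → ∞, satisfying for all z ≥ 0 the equation (conj(μ) − V_s(z)) φ(z) − (1/(ik)) [φ''(z) + 2 (ρ'(z)/ρ(z)) φ'(z) + ((ρ'/ρ)'(z) + (ρ'(z)/ρ(z))²) φ(z)] = A'(z), the following estimates hold: ‖φ‖ ≤ (√2/Im μ) ‖A'‖, ‖φ‖_{L²} ≤ (√2/Im μ) ‖A'‖_{L²}, ‖φ'‖ ≤ (√k/√(Im μ)) ‖A'‖, ‖φ'‖_{L²} ≤ (√k/√(Im μ)) ‖A'‖_{L²}, and ‖φ''‖_{L²} ≤ C k ‖A'‖_{L²} for a constant C depending only on μ_m, m and V_s. -/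
open MeasureTheory Filter

/-- Weighted `L²(ρ)` norm with weight `ρ(z) = 1 + z^m` on `(0,∞)`. -/
noncomputable def wnorm (m : ℕ) (f : ℝ → ℂ) : ℝ :=
  (∫ z in Set.Ioi (0 : ℝ), ‖f z‖ ^ 2 * (1 + z ^ m)) ^ ((1 : ℝ) / 2)

/-- Unweighted `L²(0,∞)` norm. -/
noncomputable def l2norm (f : ℝ → ℂ) : ℝ :=
  (∫ z in Set.Ioi (0 : ℝ), ‖f z‖ ^ 2) ^ ((1 : ℝ) / 2)

/-- Membership in the weighted space `L²(ρ)`, `ρ(z) = 1 + z^m`. -/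
def MemL2w (m : ℕ) (f : ℝ → ℂ) : Prop :=
  MeasureTheory.IntegrableOn (fun z : ℝ => ‖f z‖ ^ 2 * (1 + z ^ m)) (Set.Ioi 0)

/-- Membership in `L²(0,∞)`. -/
def MemL2 (f : ℝ → ℂ) : Prop :=
  MeasureTheory.IntegrableOn (fun z : ℝ => ‖f z‖ ^ 2) (Set.Ioi 0)

/-- `ρ'/ρ` for the weight `ρ(z) = 1 + z^m`. -/
noncomputable def rFun (m : ℕ) (z : ℝ) : ℝ :=
  deriv (fun w : ℝ => 1 + w ^ m) z / (1 + z ^ m)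

lemma aux_alg1 (α V β k r s q M u v u1 v1 u2 v2 Au Av : ℝ) (hk : 0 < k) (hβ : 0 < β)
    (hM : 12 * M ^ 2 ≤ k * β) (he0 : |2 * r - s| ≤ 2 * M) (hq : |q| ≤ M ^ 2)
    (h1 : (α - V) * u + β * v - (v2 + 2 * r * v1 + q * v) / k = Au)
    (h2 : (α - V) * v - β * u + (u2 + 2 * r * u1 + q * u) / k = Av) :
    β / 4 * (u ^ 2 + v ^ 2) + 1 / (2 * k) * (u1 ^ 2 + v1 ^ 2) ≤
      1 / k * ((u1 ^ 2 + v1 ^ 2) + (u2 * u + v2 * v) + s * (u1 * u + v1 * v))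
        + 1 / (2 * β) * (Au ^ 2 + Av ^ 2) := by
  have hI : Av * u - Au * v = -β * (u ^ 2 + v ^ 2) + 1 / k * ((u2 * u + v2 * v)
      + 2 * r * (u1 * u + v1 * v) + q * (u ^ 2 + v ^ 2)) := by
    rw [← h1, ← h2]; field_simp; ring
  have hY : -(β / 2 * (u ^ 2 + v ^ 2)) - 1 / (2 * β) * (Au ^ 2 + Av ^ 2) ≤ Av * u - Au * v := by
    have : Av * u - Au * v + (β / 2 * (u ^ 2 + v ^ 2)) + 1 / (2 * β) * (Au ^ 2 + Av ^ 2)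
      = 1 / (2 * β) * ((Av + β * u) ^ 2 + (Au - β * v) ^ 2) := by
      field_simp; ring
    have h0 : 0 ≤ 1 / (2 * β) * ((Av + β * u) ^ 2 + (Au - β * v) ^ 2) := by positivity
    linarith
  have he2 : (2 * r - s) ^ 2 ≤ (2 * M) ^ 2 := by
    rw [← sq_abs]; exact pow_le_pow_left₀ (abs_nonneg _) he0 2
  have hX : 0 ≤ u ^ 2 + v ^ 2 := by positivity
  have hT : (2 * r - s) * (u1 * u + v1 * v) + q * (u ^ 2 + v ^ 2) ≤
      1 / 2 * (u1 ^ 2 + v1 ^ 2) + k * β / 4 * (u ^ 2 + v ^ 2) := by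
    have a1 : (2 * r - s) * (u1 * u + v1 * v) ≤
      1 / 2 * (u1 ^ 2 + v1 ^ 2) + 1 / 2 * ((2 * r - s) ^ 2 * (u ^ 2 + v ^ 2)) := by
      nlinarith [sq_nonneg (u1 - (2 * r - s) * u), sq_nonneg (v1 - (2 * r - s) * v)]
    have a2 := mul_le_mul_of_nonneg_right he2 hX
    have a3 := mul_le_mul_of_nonneg_right ((le_abs_self q).trans hq) hX
    have a4 := mul_le_mul_of_nonneg_right hM hX
    nlinarith
  have hT' := mul_le_mul_of_nonneg_left hT (show 0 ≤ 1 / k by positivity)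
  have e1 : 1 / k * (1 / 2 * (u1 ^ 2 + v1 ^ 2) + k * β / 4 * (u ^ 2 + v ^ 2)) =
    1 / (2 * k) * (u1 ^ 2 + v1 ^ 2) + β / 4 * (u ^ 2 + v ^ 2) := by field_simp
  have e2 : 1 / k * (u1 ^ 2 + v1 ^ 2) = 2 * (1 / (2 * k) * (u1 ^ 2 + v1 ^ 2)) := by
    field_simp
  rw [e1] at hT'
  nlinarith

set_option maxHeartbeats 1000000 in
lemma aux_alg2 (α V V1 β k r q M B u v u1 v1 u2 v2 Au Av : ℝ) (hk : 0 < k) (hβ : 0 < β)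
    (hr : |r| ≤ M) (hq : |q| ≤ M ^ 2) (hB : |V1| ≤ B)
    (h1 : (α - V) * u + β * v - (v2 + 2 * r * v1 + q * v) / k = Au)
    (h2 : (α - V) * v - β * u + (u2 + 2 * r * u1 + q * u) / k = Av) :
    1 / k ^ 2 * (u2 ^ 2 + v2 ^ 2) ≤ 2 * (Au ^ 2 + Av ^ 2)
      + (16 * M ^ 2 / k ^ 2 + B / k) * (u1 ^ 2 + v1 ^ 2)
      + (4 * M ^ 4 / k ^ 2 + B / k) * (u ^ 2 + v ^ 2)
      + (-2 / k) * ((α - V) * (v * u2 - u * v2) - β * (u * u2 + v * v2)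
        - V1 * (v * u1 - u * v1) - β * (u1 ^ 2 + v1 ^ 2)) := by
  have hM : 0 ≤ M := (abs_nonneg _).trans hr
  have hB0 : 0 ≤ B := (abs_nonneg _).trans hB
  obtain ⟨g, hg⟩ : ∃ g, g = (2 * r * v1 + q * v) / k := ⟨_, rfl⟩
  obtain ⟨f, hf⟩ : ∃ f, f = (2 * r * u1 + q * u) / k := ⟨_, rfl⟩
  have hr2 : r ^ 2 ≤ M ^ 2 := by
    rw [← sq_abs]; exact pow_le_pow_left₀ (abs_nonneg _) hr 2
  have hq2 : q ^ 2 ≤ M ^ 4 := by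
    rw [← sq_abs, show M ^ 4 = (M ^ 2) ^ 2 by ring]
    exact pow_le_pow_left₀ (abs_nonneg _) hq 2
  have hfg : 2 * (f ^ 2 + g ^ 2) ≤ 16 * M ^ 2 / k ^ 2 * (u1 ^ 2 + v1 ^ 2)
      + 4 * M ^ 4 / k ^ 2 * (u ^ 2 + v ^ 2) := by
    have : (2 * r * u1 + q * u) ^ 2 + (2 * r * v1 + q * v) ^ 2 ≤
        8 * M ^ 2 * (u1 ^ 2 + v1 ^ 2) + 2 * M ^ 4 * (u ^ 2 + v ^ 2) := by
      have a1 := mul_le_mul_of_nonneg_right hr2 (show 0 ≤ u1 ^ 2 + v1 ^ 2 by positivity)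
      have a2 := mul_le_mul_of_nonneg_right hq2 (show 0 ≤ u ^ 2 + v ^ 2 by positivity)
      nlinarith [sq_nonneg (2 * r * u1 - q * u), sq_nonneg (2 * r * v1 - q * v)]
    have h3 := mul_le_mul_of_nonneg_left this (show 0 ≤ 2 / k ^ 2 by positivity)
    calc _ = 2 / k ^ 2 * ((2 * r * u1 + q * u) ^ 2 + (2 * r * v1 + q * v) ^ 2) := by
          rw [hf, hg]; field_simp
      _ ≤ _ := h3
      _ = _ := by field_simp; ring
  have hBt : -(2 / k) * (V1 * (v * u1 - u * v1)) ≤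
      B / k * (u1 ^ 2 + v1 ^ 2) + B / k * (u ^ 2 + v ^ 2) := by
    obtain ⟨b1, b2⟩ := abs_le.mp hB
    have : -2 * (V1 * (v * u1 - u * v1)) ≤ B * (u1 ^ 2 + v1 ^ 2 + (u ^ 2 + v ^ 2)) := by
      have c1 : 2 * |v * u1 - u * v1| ≤ u1 ^ 2 + v1 ^ 2 + (u ^ 2 + v ^ 2) := by
        have d1 : 2 * (v * u1 - u * v1) ≤ u1 ^ 2 + v1 ^ 2 + (u ^ 2 + v ^ 2) := by
          linarith [sq_nonneg (v - u1), sq_nonneg (u + v1), sub_sq v u1, add_sq u v1]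
        have d2 : 2 * -(v * u1 - u * v1) ≤ u1 ^ 2 + v1 ^ 2 + (u ^ 2 + v ^ 2) := by
          linarith [sq_nonneg (v + u1), sq_nonneg (u - v1), add_sq v u1, sub_sq u v1]
        rcases abs_cases (v * u1 - u * v1) with h | h <;> linarith
      have c2 : -(V1 * (v * u1 - u * v1)) ≤ |V1| * |v * u1 - u * v1| := by
        rw [← abs_mul]; exact neg_le_abs _
      have c3 := mul_le_mul_of_nonneg_right hB (abs_nonneg (v * u1 - u * v1))
      nlinarith
    have h3 := mul_le_mul_of_nonneg_left this (show 0 ≤ 1 / k by positivity)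
    calc _ = 1 / k * (-2 * (V1 * (v * u1 - u * v1))) := by ring
      _ ≤ _ := h3
      _ = _ := by ring
  have key : (Au + g) ^ 2 + (Av - f) ^ 2 = ((α - V) * u + β * v) ^ 2 + ((α - V) * v - β * u) ^ 2
      + 1 / k ^ 2 * (u2 ^ 2 + v2 ^ 2) + 2 / k * ((α - V) * (v * u2 - u * v2)
        - β * (u * u2 + v * v2)) := by
    have g1 : Au + g = (α - V) * u + β * v - v2 / k := by rw [← h1, hg]; ring
    have g2 : Av - f = (α - V) * v - β * u + u2 / k := by rw [← h2, hf]; ring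
    rw [g1, g2]; ring
  have k2 : (Au + g) ^ 2 + (Av - f) ^ 2 ≤ 2 * (Au ^ 2 + Av ^ 2) + 2 * (f ^ 2 + g ^ 2) := by
    nlinarith [sq_nonneg (Au - g), sq_nonneg (Av + f)]
  have k3 : 0 ≤ 2 / k * (β * (u1 ^ 2 + v1 ^ 2)) := by positivity
  have k4 : (-2 / k) * ((α - V) * (v * u2 - u * v2) - β * (u * u2 + v * v2)
        - V1 * (v * u1 - u * v1) - β * (u1 ^ 2 + v1 ^ 2)) =
      - (2 / k * ((α - V) * (v * u2 - u * v2) - β * (u * u2 + v * v2)))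
      - (-(2 / k) * (V1 * (v * u1 - u * v1))) + 2 / k * (β * (u1 ^ 2 + v1 ^ 2)) := by ring
  have k5 := sq_nonneg ((α - V) * u + β * v)
  have k6 := sq_nonneg ((α - V) * v - β * u)
  rw [k4, add_mul, add_mul]
  linarith

lemma aux_int_zero (F F' : ℝ → ℝ) (hF : ∀ z : ℝ, HasDerivAt F (F' z) z)
    (hi : IntegrableOn F (Set.Ioi 0)) (hi' : IntegrableOn F' (Set.Ioi 0)) (h0 : F 0 = 0) :
    ∫ z in Set.Ioi (0 : ℝ), F' z = 0 := by
  have ht : Tendsto F atTop (nhds 0) :=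
    tendsto_zero_of_hasDerivAt_of_integrableOn_Ioi (fun z _ => hF z) hi' hi
  have := integral_Ioi_of_hasDerivAt_of_tendsto (hF 0).continuousAt.continuousWithinAt
    (fun z _ => hF z) hi' ht
  rw [this, h0, sub_zero]

lemma aux_intOn (f g : ℝ → ℝ) (hf : Continuous f) (hg : IntegrableOn g (Set.Ioi 0))
    (h : ∀ z : ℝ, 0 < z → |f z| ≤ g z) : IntegrableOn f (Set.Ioi 0) := by
  refine Integrable.mono' hg hf.aestronglyMeasurable ?_
  filter_upwards [ae_restrict_mem measurableSet_Ioi] with z hz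
  exact h z hz

lemma aux_energy (α β k M : ℝ) (V r s q w w1 u v u1 v1 u2 v2 Au Av : ℝ → ℝ)
    (hk : 0 < k) (hβ : 0 < β) (hM0 : 0 ≤ M)
    (hM : 12 * M ^ 2 ≤ k * β)
    (he : ∀ z, 0 < z → |2 * r z - s z| ≤ 2 * M)
    (hs : ∀ z, 0 < z → |s z| ≤ M)
    (hq : ∀ z, 0 < z → |q z| ≤ M ^ 2)
    (hw : ∀ z, HasDerivAt w (w1 z) z) (hw1 : ∀ z, 0 < z → w1 z = s z * w z)
    (hw0 : ∀ z, 0 < z → 0 ≤ w z) (hw1c : Continuous w1)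
    (hu : ∀ z, HasDerivAt u (u1 z) z) (hv : ∀ z, HasDerivAt v (v1 z) z)
    (hu1 : ∀ z, HasDerivAt u1 (u2 z) z) (hv1 : ∀ z, HasDerivAt v1 (v2 z) z)
    (hu2 : Continuous u2) (hv2 : Continuous v2)
    (hX : IntegrableOn (fun z => (u z ^ 2 + v z ^ 2) * w z) (Set.Ioi 0))
    (hY : IntegrableOn (fun z => (u1 z ^ 2 + v1 z ^ 2) * w z) (Set.Ioi 0))
    (hW : IntegrableOn (fun z => (u2 z ^ 2 + v2 z ^ 2) * w z) (Set.Ioi 0))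
    (hZ : IntegrableOn (fun z => (Au z ^ 2 + Av z ^ 2) * w z) (Set.Ioi 0))
    (hu0 : u 0 = 0) (hv0 : v 0 = 0)
    (h1 : ∀ z, 0 < z → (α - V z) * u z + β * v z
      - (v2 z + 2 * r z * v1 z + q z * v z) / k = Au z)
    (h2 : ∀ z, 0 < z → (α - V z) * v z - β * u z
      + (u2 z + 2 * r z * u1 z + q z * u z) / k = Av z) :
    β / 4 * (∫ z in Set.Ioi (0 : ℝ), (u z ^ 2 + v z ^ 2) * w z)
      + 1 / (2 * k) * (∫ z in Set.Ioi (0 : ℝ), (u1 z ^ 2 + v1 z ^ 2) * w z)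
      ≤ 1 / (2 * β) * ∫ z in Set.Ioi (0 : ℝ), (Au z ^ 2 + Av z ^ 2) * w z := by
  have cu : Continuous u := continuous_iff_continuousAt.2 fun z => (hu z).continuousAt
  have cv : Continuous v := continuous_iff_continuousAt.2 fun z => (hv z).continuousAt
  have cu1 : Continuous u1 := continuous_iff_continuousAt.2 fun z => (hu1 z).continuousAt
  have cv1 : Continuous v1 := continuous_iff_continuousAt.2 fun z => (hv1 z).continuousAt
  have cw : Continuous w := continuous_iff_continuousAt.2 fun z => (hw z).continuousAt
  set F : ℝ → ℝ := fun z => w z * (u1 z * u z + v1 z * v z) with hF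
  set F' : ℝ → ℝ := fun z => w1 z * (u1 z * u z + v1 z * v z) + w z * ((u1 z ^ 2 + v1 z ^ 2)
    + (u2 z * u z + v2 z * v z)) with hF'
  have hd : ∀ z, HasDerivAt F (F' z) z := by
    intro z
    have := (hw z).mul (((hu1 z).mul (hu z)).add ((hv1 z).mul (hv z)))
    refine HasDerivAt.congr_deriv (f := F) this ?_
    simp only [hF', Pi.add_apply, Pi.mul_apply]; ring
  have hFi : IntegrableOn F (Set.Ioi 0) := by
    refine aux_intOn F _ (by fun_prop) (hX.add hY) ?_
    intro z hz
    have hwz := hw0 z hz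
    simp only [hF, Pi.add_apply, abs_mul, abs_of_nonneg hwz]
    have : |u1 z * u z + v1 z * v z| ≤ (u z ^ 2 + v z ^ 2) + (u1 z ^ 2 + v1 z ^ 2) := by
      rw [abs_le]; constructor <;>
      nlinarith [sq_nonneg (u1 z + u z), sq_nonneg (v1 z + v z), sq_nonneg (u1 z - u z),
        sq_nonneg (v1 z - v z)]
    nlinarith
  have hFi' : IntegrableOn F' (Set.Ioi 0) := by
    refine aux_intOn F' _ (by fun_prop)
      (((hX.add hY).const_mul M).add (hY.add (hX.add hW))) ?_
    intro z hz
    have hwz := hw0 z hz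
    have a1 : |u1 z * u z + v1 z * v z| ≤ (u z ^ 2 + v z ^ 2) + (u1 z ^ 2 + v1 z ^ 2) := by
      rw [abs_le]; constructor <;>
      nlinarith [sq_nonneg (u1 z + u z), sq_nonneg (v1 z + v z), sq_nonneg (u1 z - u z),
        sq_nonneg (v1 z - v z)]
    have a2 : |(u1 z ^ 2 + v1 z ^ 2) + (u2 z * u z + v2 z * v z)| ≤
        (u1 z ^ 2 + v1 z ^ 2) + ((u z ^ 2 + v z ^ 2) + (u2 z ^ 2 + v2 z ^ 2)) := by
      rw [abs_le]; constructor <;>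
      nlinarith [sq_nonneg (u2 z + u z), sq_nonneg (v2 z + v z), sq_nonneg (u2 z - u z),
        sq_nonneg (v2 z - v z), sq_nonneg (u1 z), sq_nonneg (v1 z)]
    have a3 : |w1 z * (u1 z * u z + v1 z * v z)| ≤
        M * (((u z ^ 2 + v z ^ 2) + (u1 z ^ 2 + v1 z ^ 2)) * w z) := by
      rw [hw1 z hz, abs_mul, abs_mul, abs_of_nonneg hwz]
      have := mul_le_mul (hs z hz) a1 (abs_nonneg _) hM0
      nlinarith
    have a4 : |w z * ((u1 z ^ 2 + v1 z ^ 2) + (u2 z * u z + v2 z * v z))| ≤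
        w z * ((u1 z ^ 2 + v1 z ^ 2) + ((u z ^ 2 + v z ^ 2) + (u2 z ^ 2 + v2 z ^ 2))) := by
      rw [abs_mul, abs_of_nonneg hwz]
      exact mul_le_mul_of_nonneg_left a2 hwz
    have a5 := abs_add_le (w1 z * (u1 z * u z + v1 z * v z))
      (w z * ((u1 z ^ 2 + v1 z ^ 2) + (u2 z * u z + v2 z * v z)))
    simp only [hF', Pi.add_apply]
    refine a5.trans ((add_le_add a3 a4).trans (le_of_eq ?_))
    ring
  have hz0 := aux_int_zero F F' hd hFi hFi' (by simp [hF, hu0, hv0])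
  have hL : IntegrableOn (fun z => β / 4 * ((u z ^ 2 + v z ^ 2) * w z)
      + 1 / (2 * k) * ((u1 z ^ 2 + v1 z ^ 2) * w z)) (Set.Ioi 0) :=
    (hX.const_mul _).add (hY.const_mul _)
  have hR : IntegrableOn (fun z => 1 / k * F' z
      + 1 / (2 * β) * ((Au z ^ 2 + Av z ^ 2) * w z)) (Set.Ioi 0) :=
    (hFi'.const_mul _).add (hZ.const_mul _)
  have hm := setIntegral_mono_on hL hR measurableSet_Ioi (by
    intro z hz
    have := mul_le_mul_of_nonneg_right
      (aux_alg1 α (V z) β k (r z) (s z) (q z) M (u z) (v z) (u1 z) (v1 z) (u2 z) (v2 z)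
        (Au z) (Av z) hk hβ hM (he z hz) (hq z hz) (h1 z hz) (h2 z hz)) (hw0 z hz)
    simp only [hF', hw1 z hz]
    linarith)
  rw [integral_add (hX.const_mul _) (hY.const_mul _),
    integral_add (hFi'.const_mul _) (hZ.const_mul _)] at hm
  simp only [integral_const_mul] at hm
  rw [hz0] at hm
  linarith

lemma aux_second (α β k M B : ℝ) (V V1 r q u v u1 v1 u2 v2 Au Av : ℝ → ℝ)
    (hk : 0 < k) (hβ : 0 < β)
    (hr : ∀ z, 0 < z → |r z| ≤ M)
    (hq : ∀ z, 0 < z → |q z| ≤ M ^ 2)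
    (hB : ∀ z, 0 < z → |V1 z| ≤ B)
    (hV : ∀ z, HasDerivAt V (V1 z) z) (hV1 : Continuous V1)
    (hu : ∀ z, HasDerivAt u (u1 z) z) (hv : ∀ z, HasDerivAt v (v1 z) z)
    (hu1 : ∀ z, HasDerivAt u1 (u2 z) z) (hv1 : ∀ z, HasDerivAt v1 (v2 z) z)
    (hu2 : Continuous u2) (hv2 : Continuous v2)
    (hX : IntegrableOn (fun z => (u z ^ 2 + v z ^ 2)) (Set.Ioi 0))
    (hY : IntegrableOn (fun z => (u1 z ^ 2 + v1 z ^ 2)) (Set.Ioi 0))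
    (hW : IntegrableOn (fun z => (u2 z ^ 2 + v2 z ^ 2)) (Set.Ioi 0))
    (hZ : IntegrableOn (fun z => (Au z ^ 2 + Av z ^ 2)) (Set.Ioi 0))
    (hu0 : u 0 = 0) (hv0 : v 0 = 0)
    (h1 : ∀ z, 0 < z → (α - V z) * u z + β * v z
      - (v2 z + 2 * r z * v1 z + q z * v z) / k = Au z)
    (h2 : ∀ z, 0 < z → (α - V z) * v z - β * u z
      + (u2 z + 2 * r z * u1 z + q z * u z) / k = Av z) :
    1 / k ^ 2 * (∫ z in Set.Ioi (0 : ℝ), (u2 z ^ 2 + v2 z ^ 2))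
      ≤ 2 * (∫ z in Set.Ioi (0 : ℝ), (Au z ^ 2 + Av z ^ 2))
        + (16 * M ^ 2 / k ^ 2 + B / k) * (∫ z in Set.Ioi (0 : ℝ), (u1 z ^ 2 + v1 z ^ 2))
        + (4 * M ^ 4 / k ^ 2 + B / k) * (∫ z in Set.Ioi (0 : ℝ), (u z ^ 2 + v z ^ 2)) := by
  have cu : Continuous u := continuous_iff_continuousAt.2 fun z => (hu z).continuousAt
  have cv : Continuous v := continuous_iff_continuousAt.2 fun z => (hv z).continuousAt
  have cu1 : Continuous u1 := continuous_iff_continuousAt.2 fun z => (hu1 z).continuousAt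
  have cv1 : Continuous v1 := continuous_iff_continuousAt.2 fun z => (hv1 z).continuousAt
  have cV : Continuous V := continuous_iff_continuousAt.2 fun z => (hV z).continuousAt
  set p1 : ℝ → ℝ := fun z => (α - V z) * u z + β * v z with hp1
  set p2 : ℝ → ℝ := fun z => (α - V z) * v z - β * u z with hp2
  have hP : IntegrableOn (fun z => p1 z ^ 2 + p2 z ^ 2) (Set.Ioi 0) := by
    refine aux_intOn _ _ (by fun_prop) (((hZ.const_mul 4).add (hW.const_mul (4 / k ^ 2))).add
      ((hY.const_mul (16 * M ^ 2 / k ^ 2)).add (hX.const_mul (4 * M ^ 4 / k ^ 2)))) ?_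
    intro z hz
    have e1 : p1 z = Au z + v2 z / k + 2 * r z * v1 z / k + q z * v z / k := by
      simp only [hp1]; rw [← h1 z hz]; ring
    have e2 : p2 z = Av z + - (u2 z / k) + - (2 * r z * u1 z / k) + - (q z * u z / k) := by
      simp only [hp2]; rw [← h2 z hz]; ring
    have four : ∀ a b c d : ℝ, (a + b + c + d) ^ 2 ≤ 4 * (a ^ 2 + b ^ 2 + c ^ 2 + d ^ 2) := by
      intro a b c d
      nlinarith [sq_nonneg (a - b), sq_nonneg (a - c), sq_nonneg (a - d), sq_nonneg (b - c),
        sq_nonneg (b - d), sq_nonneg (c - d)]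
    have hr2 : r z ^ 2 ≤ M ^ 2 := by
      rw [← sq_abs]; exact pow_le_pow_left₀ (abs_nonneg _) (hr z hz) 2
    have hq2 : q z ^ 2 ≤ M ^ 4 := by
      rw [← sq_abs, show M ^ 4 = (M ^ 2) ^ 2 by ring]
      exact pow_le_pow_left₀ (abs_nonneg _) (hq z hz) 2
    have a1 := mul_le_mul_of_nonneg_right hr2
      (show 0 ≤ 16 / k ^ 2 * (u1 z ^ 2 + v1 z ^ 2) by positivity)
    have a2 := mul_le_mul_of_nonneg_right hq2
      (show 0 ≤ 4 / k ^ 2 * (u z ^ 2 + v z ^ 2) by positivity)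
    have f1 := four (Au z) (v2 z / k) (2 * r z * v1 z / k) (q z * v z / k)
    have f2 := four (Av z) (-(u2 z / k)) (-(2 * r z * u1 z / k)) (-(q z * u z / k))
    rw [abs_of_nonneg (by positivity), e1, e2]
    simp only [Pi.add_apply]
    refine (add_le_add f1 f2).trans ?_
    calc _ = 4 * (Au z ^ 2 + Av z ^ 2) + 4 / k ^ 2 * (u2 z ^ 2 + v2 z ^ 2)
          + (r z ^ 2 * (16 / k ^ 2 * (u1 z ^ 2 + v1 z ^ 2))
            + q z ^ 2 * (4 / k ^ 2 * (u z ^ 2 + v z ^ 2))) := by ring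
      _ ≤ _ := add_le_add le_rfl (add_le_add a1 a2)
      _ = _ := by ring
  set F : ℝ → ℝ := fun z => (α - V z) * (v z * u1 z - u z * v1 z)
    - β * (u z * u1 z + v z * v1 z) with hF
  set F' : ℝ → ℝ := fun z => (α - V z) * (v z * u2 z - u z * v2 z)
    - β * (u z * u2 z + v z * v2 z)
        - V1 z * (v z * u1 z - u z * v1 z) - β * (u1 z ^ 2 + v1 z ^ 2) with hF'
  have hd : ∀ z, HasDerivAt F (F' z) z := by
    intro z
    have := (((hV z).const_sub α).mul (((hv z).mul (hu1 z)).sub ((hu z).mul (hv1 z)))).sub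
      ((((hu z).mul (hu1 z)).add ((hv z).mul (hv1 z))).const_mul β)
    refine HasDerivAt.congr_deriv (f := F) this ?_
    simp only [hF', Pi.add_apply, Pi.mul_apply, Pi.sub_apply]; ring
  have hFi : IntegrableOn F (Set.Ioi 0) := by
    refine aux_intOn F _ (by fun_prop) (hP.add hY) ?_
    intro z hz
    have : F z = p2 z * u1 z - p1 z * v1 z := by simp only [hF, hp1, hp2]; ring
    rw [this]
    simp only [Pi.add_apply]
    rw [abs_le]; constructor <;>
      nlinarith [sq_nonneg (p2 z + u1 z), sq_nonneg (p1 z + v1 z), sq_nonneg (p2 z - u1 z),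
        sq_nonneg (p1 z - v1 z)]
  have hFi' : IntegrableOn F' (Set.Ioi 0) := by
    refine aux_intOn F' _ (by fun_prop)
      (((hP.add hW).add ((hX.add hY).const_mul B)).add (hY.const_mul β)) ?_
    intro z hz
    have : F' z = (p2 z * u2 z - p1 z * v2 z) + (- (V1 z * (v z * u1 z - u z * v1 z)))
      + - (β * (u1 z ^ 2 + v1 z ^ 2)) := by simp only [hF', hp1, hp2]; ring
    rw [this]
    simp only [Pi.add_apply]
    have b1 : |p2 z * u2 z - p1 z * v2 z| ≤ p1 z ^ 2 + p2 z ^ 2 + (u2 z ^ 2 + v2 z ^ 2) := by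
      rw [abs_le]; constructor <;>
      nlinarith [sq_nonneg (p2 z + u2 z), sq_nonneg (p1 z + v2 z), sq_nonneg (p2 z - u2 z),
        sq_nonneg (p1 z - v2 z)]
    have b2 : |v z * u1 z - u z * v1 z| ≤ u z ^ 2 + v z ^ 2 + (u1 z ^ 2 + v1 z ^ 2) := by
      rw [abs_le]; constructor <;>
      nlinarith [sq_nonneg (v z + u1 z), sq_nonneg (u z + v1 z), sq_nonneg (v z - u1 z),
        sq_nonneg (u z - v1 z)]
    have b3 : |-(V1 z * (v z * u1 z - u z * v1 z))| ≤
        B * (u z ^ 2 + v z ^ 2 + (u1 z ^ 2 + v1 z ^ 2)) := by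
      rw [abs_neg, abs_mul]
      exact mul_le_mul (hB z hz) b2 (abs_nonneg _) ((abs_nonneg _).trans (hB z hz))
    have b4 : |-(β * (u1 z ^ 2 + v1 z ^ 2))| = β * (u1 z ^ 2 + v1 z ^ 2) := by
      rw [abs_neg, abs_of_nonneg (by positivity)]
    refine (abs_add_le _ _).trans (add_le_add ((abs_add_le _ _).trans (add_le_add b1 b3)) b4.le)
  have hz0 := aux_int_zero F F' hd hFi hFi' (by simp [hF, hu0, hv0])
  have i1 := hZ.const_mul 2
  have i2 := hY.const_mul (16 * M ^ 2 / k ^ 2 + B / k)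
  have i3 := hX.const_mul (4 * M ^ 4 / k ^ 2 + B / k)
  have i4 := hFi'.const_mul (-2 / k)
  have hm := setIntegral_mono_on (hW.const_mul (1 / k ^ 2)) (((i1.add i2).add i3).add i4)
    measurableSet_Ioi (by
    intro z hz
    exact (aux_alg2 α (V z) (V1 z) β k (r z) (q z) M B (u z) (v z) (u1 z) (v1 z) (u2 z) (v2 z)
        (Au z) (Av z) hk hβ (hr z hz) (hq z hz) (hB z hz) (h1 z hz) (h2 z hz)))
  rw [integral_add' ((i1.add i2).add i3) i4, integral_add' (i1.add i2) i3, integral_add' i1 i2] at hm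
  simp only [integral_const_mul] at hm
  rw [hz0] at hm
  linarith

lemma aux_sqrt (X Z c : ℝ) (hc : 0 ≤ c) (h : X ≤ c ^ 2 * Z) :
    X ^ ((1 : ℝ) / 2) ≤ c * Z ^ ((1 : ℝ) / 2) := by
  rw [← Real.sqrt_eq_rpow, ← Real.sqrt_eq_rpow]
  calc √X ≤ √(c ^ 2 * Z) := Real.sqrt_le_sqrt h
    _ = _ := by rw [Real.sqrt_mul (sq_nonneg c), Real.sqrt_sq hc]

lemma aux_rFun_eq (m : ℕ) : rFun m = fun z : ℝ => (m * z ^ (m - 1)) / (1 + z ^ m) := by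
  funext z
  simp [rFun]

lemma aux_pow_le (z : ℝ) (hz : 0 < z) (a b : ℕ) (h : a ≤ b) : z ^ a ≤ 1 + z ^ b := by
  rcases le_total z 1 with h1 | h1
  · have := pow_le_one₀ hz.le h1 (n := a)
    have := pow_pos hz b
    linarith
  · have := pow_le_pow_right₀ h1 h
    linarith

lemma aux_r_nonneg (m : ℕ) (z : ℝ) (hz : 0 < z) : 0 ≤ rFun m z := by
  rw [aux_rFun_eq]; positivity

lemma aux_r_le (m : ℕ) (z : ℝ) (hz : 0 < z) : rFun m z ≤ m := by
  rw [aux_rFun_eq]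
  have : 0 < 1 + z ^ m := by positivity
  simp only
  rw [div_le_iff₀ this]
  exact mul_le_mul_of_nonneg_left (aux_pow_le z hz _ _ (by omega)) (by positivity)

lemma aux_q (m : ℕ) (z : ℝ) (hz : 0 < z) : |deriv (rFun m) z + rFun m z ^ 2| ≤ (m : ℝ) ^ 2 := by
  have hp : 0 < 1 + z ^ m := by positivity
  have hd : HasDerivAt (rFun m) (((m * (((m - 1 : ℕ) : ℝ) * z ^ (m - 1 - 1))) * (1 + z ^ m)
      - (m * z ^ (m - 1)) * (m * z ^ (m - 1))) / (1 + z ^ m) ^ 2) z := by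
    rw [aux_rFun_eq]
    exact ((hasDerivAt_pow (m - 1) z).const_mul (m : ℝ)).div
      ((hasDerivAt_pow m z).const_add 1) hp.ne'
  have e : deriv (rFun m) z + rFun m z ^ 2 =
      (m * (((m - 1 : ℕ) : ℝ) * z ^ (m - 1 - 1))) / (1 + z ^ m) := by
    rw [hd.deriv, aux_rFun_eq]; field_simp; ring
  rw [e, abs_of_nonneg (by positivity), div_le_iff₀ hp]
  have h1 : ((m - 1 : ℕ) : ℝ) ≤ m := by exact_mod_cast Nat.sub_le _ _
  have h2 := aux_pow_le z hz (m - 1 - 1) m (by omega)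
  have h3 := mul_le_mul h1 h2 (by positivity) (by positivity)
  have h4 := mul_le_mul_of_nonneg_left h3 (show (0 : ℝ) ≤ m by positivity)
  calc _ ≤ _ := h4
    _ = _ := by ring

lemma aux_bdd (f : ℝ → ℝ) (hf : Continuous f) (l : ℝ) (h : Tendsto f atTop (nhds l)) :
    ∃ B, 0 ≤ B ∧ ∀ z, 0 < z → |f z| ≤ B := by
  have h1 : ∀ᶠ z in atTop, |f z| < |l| + 1 := h.abs.eventually_lt_const (by linarith)
  obtain ⟨N, hN⟩ := eventually_atTop.1 h1
  obtain ⟨c, hc⟩ := (isCompact_Icc (a := (0 : ℝ)) (b := N)).exists_bound_of_continuousOn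
    hf.continuousOn
  refine ⟨max (|l| + 1) c, le_max_of_le_left (by positivity), fun z hz => ?_⟩
  rcases le_total z N with hz' | hz'
  · exact (hc z ⟨hz.le, hz'⟩).trans (le_max_right _ _)
  · exact (hN z hz').le.trans (le_max_left _ _)

lemma aux_eq_parts (μ φ φ1 φ2 A : ℂ) (V k r q' : ℝ) (hk : 0 < k)
    (h : ((starRingEnd ℂ) μ - (V : ℂ)) * φ - (1 / (Complex.I * (k : ℂ))) * (φ2
                + 2 * (r : ℂ) * φ1 + ((q' : ℂ) + (r : ℂ) ^ 2) * φ) = A) :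
    (μ.re - V) * φ.re + μ.im * φ.im
      - (φ2.im + 2 * r * φ1.im + (q' + r ^ 2) * φ.im) / k = A.re ∧
    (μ.re - V) * φ.im - μ.im * φ.re
      + (φ2.re + 2 * r * φ1.re + (q' + r ^ 2) * φ.re) / k = A.im := by
  have hk' : (k : ℂ) ≠ 0 := by exact_mod_cast hk.ne'
  have e : (1 / (Complex.I * (k : ℂ))) = ⟨0, -(1 / k)⟩ := by
    have : (⟨0, -(1 / k)⟩ : ℂ) = -(Complex.I * ((1 / k : ℝ) : ℂ)) := by
      apply Complex.ext <;> simp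
    rw [this]; push_cast; field_simp; simp
  have e2 : ((q' : ℂ) + (r : ℂ) ^ 2) = ((q' + r ^ 2 : ℝ) : ℂ) := by push_cast; rfl
  have e3 : (2 * (r : ℂ)) = ((2 * r : ℝ) : ℂ) := by push_cast; rfl
  rw [e, e2, e3] at h
  subst h
  simp only [Complex.sub_re, Complex.sub_im, Complex.mul_re, Complex.mul_im, Complex.add_re,
    Complex.add_im, Complex.ofReal_re, Complex.ofReal_im, Complex.conj_re, Complex.conj_im]
  constructor <;> ring

/-- weighted resolvent estimates for the auxiliary problem
`(conj μ - V_s) φ - (1/(ik))[φ'' + 2(ρ'/ρ)φ' + ((ρ'/ρ)' + (ρ'/ρ)²)φ] = A'`. -/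
theorem auxiliary_resolvent_estimates
    (Vs : ℝ → ℝ) (As : ℝ)
    (hVs_smooth : ContDiff ℝ (⊤ : ℕ∞) Vs)
    (hVs0 : Vs 0 = 0)
    (hVs'pos : ∀ z : ℝ, 0 ≤ z → 0 < deriv Vs z)
    (hdecay : ∀ p : ℕ, Tendsto (fun z : ℝ => z ^ p * (Vs z - z - As)) atTop (nhds 0))
    (hderiv_decay : ∀ n : ℕ, 1 ≤ n → ∀ p : ℕ,
      Tendsto (fun z : ℝ => z ^ p * iteratedDeriv n (fun w => Vs w - w) z) atTop (nhds 0))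
    (m : ℕ) (hm : 1 ≤ m) (μm : ℝ) (hμm : 0 < μm) :
    ∃ k₀ > (0 : ℝ), ∃ C > (0 : ℝ),
      ∀ k : ℝ, k₀ ≤ k → ∀ μ : ℂ, μm ≤ μ.im →
        ∀ A φ : ℝ → ℂ, ContDiff ℝ 1 A → ContDiff ℝ 2 φ →
          MemL2w m (deriv A) → MemL2w m φ → MemL2w m (deriv φ) →
          MemL2w m (iteratedDeriv 2 φ) →
          φ 0 = 0 → Tendsto φ atTop (nhds 0) →
          (∀ z : ℝ, 0 ≤ z →
            ((starRingEnd ℂ) μ - (Vs z : ℂ)) * φ z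
              - (1 / (Complex.I * (k : ℂ))) * (iteratedDeriv 2 φ z
                + 2 * (rFun m z : ℂ) * deriv φ z
                + (((deriv (rFun m) z : ℝ) : ℂ) + (rFun m z : ℂ) ^ 2) * φ z)
            = deriv A z) →
          wnorm m φ ≤ Real.sqrt 2 / μ.im * wnorm m (deriv A) ∧
          l2norm φ ≤ Real.sqrt 2 / μ.im * l2norm (deriv A) ∧
          wnorm m (deriv φ) ≤ Real.sqrt k / Real.sqrt μ.im * wnorm m (deriv A) ∧
          l2norm (deriv φ) ≤ Real.sqrt k / Real.sqrt μ.im * l2norm (deriv A) ∧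
          l2norm (iteratedDeriv 2 φ) ≤ C * k * l2norm (deriv A) := by
  classical
  obtain ⟨B, hB0, hB⟩ : ∃ B, 0 ≤ B ∧ ∀ z, 0 < z → |deriv Vs z| ≤ B := by
    have hc : Continuous (deriv Vs) := hVs_smooth.continuous_deriv (by simp)
    refine aux_bdd _ hc 1 ?_
    have h := hderiv_decay 1 le_rfl 0
    have hdiff : Differentiable ℝ Vs := hVs_smooth.differentiable (by simp)
    have e : ∀ z, deriv Vs z = z ^ 0 * iteratedDeriv 1 (fun w => Vs w - w) z + 1 := by
      intro z
      have hs : HasDerivAt (fun w => Vs w - w) (deriv Vs z - 1) z :=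
        (hdiff z).hasDerivAt.sub (hasDerivAt_id z)
      rw [iteratedDeriv_one, pow_zero, one_mul, hs.deriv]
      ring
    have h2 := h.add_const 1
    rw [zero_add] at h2
    exact h2.congr fun z => (e z).symm
  have hmR : (1 : ℝ) ≤ m := by exact_mod_cast hm
  set D : ℝ := 2 + (16 * (m : ℝ) ^ 2 + B) / μm + (4 * (m : ℝ) ^ 4 + B) * (2 / μm ^ 2) with hD
  have hDpos : 0 < D := by positivity
  refine ⟨max 1 (12 * (m : ℝ) ^ 2 / μm), by positivity, √D, Real.sqrt_pos.2 hDpos, ?_⟩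
  intro k hk μ hμ A φ hA hφ mA mφ mφ1 mφ2 hφ0 _ heq
  have hk1 : 1 ≤ k := (le_max_left _ _).trans hk
  have hk0 : 0 < k := by linarith
  have hβ : 0 < μ.im := by linarith
  have hM : 12 * (m : ℝ) ^ 2 ≤ k * μ.im := by
    have h := (le_max_right _ _).trans hk
    rw [div_le_iff₀ hμm] at h
    exact h.trans (mul_le_mul_of_nonneg_left hμ hk0.le)
  -- derivatives
  have hd0 : ∀ z, HasDerivAt φ (deriv φ z) z := fun z =>
    (hφ.differentiable (by simp) z).hasDerivAt
  have e2 : iteratedDeriv 2 φ = deriv (deriv φ) := by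
    rw [iteratedDeriv_succ, iteratedDeriv_one]
  have hφ' : ContDiff ℝ 1 (deriv φ) := by
    have : ContDiff ℝ (1 + 1) φ := by simpa [one_add_one_eq_two] using hφ
    exact (contDiff_succ_iff_deriv.1 this).2.2
  have hd1 : ∀ z, HasDerivAt (deriv φ) (iteratedDeriv 2 φ z) z := fun z => by
    rw [e2]; exact (hφ'.differentiable (by simp) z).hasDerivAt
  have c2 : Continuous (iteratedDeriv 2 φ) := by
    rw [e2]; exact hφ'.continuous_deriv le_rfl
  have hre : ∀ (f : ℝ → ℂ) (f' : ℂ) (z : ℝ), HasDerivAt f f' z →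
      HasDerivAt (fun z => (f z).re) f'.re z := fun f f' z h =>
    Complex.reCLM.hasFDerivAt.comp_hasDerivAt z h
  have him : ∀ (f : ℝ → ℂ) (f' : ℂ) (z : ℝ), HasDerivAt f f' z →
      HasDerivAt (fun z => (f z).im) f'.im z := fun f f' z h =>
    Complex.imCLM.hasFDerivAt.comp_hasDerivAt z h
  have nsq : ∀ x : ℂ, ‖x‖ ^ 2 = x.re ^ 2 + x.im ^ 2 := fun x => by
    rw [Complex.sq_norm, Complex.normSq_apply]; ring
  have hu0 : (φ 0).re = 0 := by simp [hφ0]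
  have hv0 : (φ 0).im = 0 := by simp [hφ0]
  have hh := fun z (hz : 0 < z) => aux_eq_parts μ (φ z) (deriv φ z) (iteratedDeriv 2 φ z)
    (deriv A z) (Vs z) k (rFun m z) (deriv (rFun m) z) hk0 (heq z hz.le)
  have unw : ∀ f : ℝ → ℂ, Continuous f → MemL2w m f →
      IntegrableOn (fun z => (f z).re ^ 2 + (f z).im ^ 2) (Set.Ioi 0) := by
    intro f hf h
    have hc : Continuous fun z => (f z).re ^ 2 + (f z).im ^ 2 := by fun_prop
    refine aux_intOn _ _ hc h fun z hz => ?_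
    rw [nsq, abs_of_nonneg (by positivity)]
    have : 0 ≤ z ^ m := by positivity
    exact le_mul_of_one_le_right (by positivity) (by linarith)
  have cA : Continuous (deriv A) := hA.continuous_deriv le_rfl
  have c1 : Continuous (deriv φ) := hφ'.continuous
  have iZ := unw _ cA mA
  have iX := unw _ hφ.continuous mφ
  have iY := unw _ c1 mφ1
  have iW := unw _ c2 mφ2
  have wt : ∀ f : ℝ → ℂ, MemL2w m f →
      IntegrableOn (fun z => ((f z).re ^ 2 + (f z).im ^ 2) * (1 + z ^ m)) (Set.Ioi 0) := by
    intro f h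
    simp only [MemL2w, nsq] at h
    exact h
  have hr2 : ∀ z, 0 < z → |rFun m z| ≤ m := fun z hz => by
    rw [abs_of_nonneg (aux_r_nonneg m z hz)]; exact aux_r_le m z hz
  have E1 := aux_energy μ.re μ.im k m Vs (rFun m) (rFun m)
    (fun z => deriv (rFun m) z + rFun m z ^ 2) (fun z => 1 + z ^ m) (fun z => m * z ^ (m - 1))
    (fun z => (φ z).re) (fun z => (φ z).im) (fun z => (deriv φ z).re) (fun z => (deriv φ z).im)
    (fun z => (iteratedDeriv 2 φ z).re) (fun z => (iteratedDeriv 2 φ z).im)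
    (fun z => (deriv A z).re) (fun z => (deriv A z).im)
    hk0 hβ (by positivity) hM
    (fun z hz => by
      have h1 := aux_r_nonneg m z hz
      have h2 := aux_r_le m z hz
      rw [abs_le]; constructor <;> linarith) hr2
    (fun z hz => aux_q m z hz)
    (fun z => (hasDerivAt_pow m z).const_add 1)
    (fun z hz => by
      have hp : 0 < 1 + z ^ m := by positivity
      rw [aux_rFun_eq]; field_simp)
    (fun z hz => by positivity) (by fun_prop)
    (fun z => hre _ _ z (hd0 z)) (fun z => him _ _ z (hd0 z))
    (fun z => hre _ _ z (hd1 z)) (fun z => him _ _ z (hd1 z))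
    (by fun_prop) (by fun_prop) (wt _ mφ) (wt _ mφ1) (wt _ mφ2) (wt _ mA) hu0 hv0
    (fun z hz => (hh z hz).1) (fun z hz => (hh z hz).2)
  have E2 := aux_energy μ.re μ.im k m Vs (rFun m) (fun _ => 0)
    (fun z => deriv (rFun m) z + rFun m z ^ 2) (fun _ => 1) (fun _ => 0)
    (fun z => (φ z).re) (fun z => (φ z).im) (fun z => (deriv φ z).re) (fun z => (deriv φ z).im)
    (fun z => (iteratedDeriv 2 φ z).re) (fun z => (iteratedDeriv 2 φ z).im)
    (fun z => (deriv A z).re) (fun z => (deriv A z).im)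
    hk0 hβ (by positivity) hM
    (fun z hz => by
      have h1 := aux_r_nonneg m z hz
      have h2 := aux_r_le m z hz
      rw [abs_le]; constructor <;> linarith) (fun z hz => by simp)
    (fun z hz => aux_q m z hz)
    (fun z => hasDerivAt_const z 1)
    (fun z hz => by simp)
    (fun z hz => by positivity) (by fun_prop)
    (fun z => hre _ _ z (hd0 z)) (fun z => him _ _ z (hd0 z))
    (fun z => hre _ _ z (hd1 z)) (fun z => him _ _ z (hd1 z))
    (by fun_prop) (by fun_prop) (by simpa using iX) (by simpa using iY) (by simpa using iW)
    (by simpa using iZ) hu0 hv0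
    (fun z hz => (hh z hz).1) (fun z hz => (hh z hz).2)
  have E3 := aux_second μ.re μ.im k m B Vs (deriv Vs) (rFun m)
    (fun z => deriv (rFun m) z + rFun m z ^ 2)
    (fun z => (φ z).re) (fun z => (φ z).im) (fun z => (deriv φ z).re) (fun z => (deriv φ z).im)
    (fun z => (iteratedDeriv 2 φ z).re) (fun z => (iteratedDeriv 2 φ z).im)
    (fun z => (deriv A z).re) (fun z => (deriv A z).im)
    hk0 hβ hr2 (fun z hz => aux_q m z hz) hB
    (fun z => (hVs_smooth.differentiable (by simp) z).hasDerivAt)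
    (hVs_smooth.continuous_deriv (by simp))
    (fun z => hre _ _ z (hd0 z)) (fun z => him _ _ z (hd0 z))
    (fun z => hre _ _ z (hd1 z)) (fun z => him _ _ z (hd1 z))
    (by fun_prop) (by fun_prop) iX iY iW iZ hu0 hv0
    (fun z hz => (hh z hz).1) (fun z hz => (hh z hz).2)
  simp only [mul_one] at E2
  simp only [← nsq] at E1 E2 E3
  have nnw : ∀ f : ℝ → ℂ, 0 ≤ ∫ z in Set.Ioi (0 : ℝ), ‖f z‖ ^ 2 * (1 + z ^ m) := fun f =>
    setIntegral_nonneg measurableSet_Ioi fun z hz => by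
      have : 0 < z := hz
      positivity
  have nn : ∀ f : ℝ → ℂ, 0 ≤ ∫ z in Set.Ioi (0 : ℝ), ‖f z‖ ^ 2 := fun f =>
    setIntegral_nonneg measurableSet_Ioi fun z hz => by positivity
  have conc : ∀ X Y Z : ℝ, 0 ≤ X → 0 ≤ Y →
      μ.im / 4 * X + 1 / (2 * k) * Y ≤ 1 / (2 * μ.im) * Z →
      X ≤ (2 / μ.im ^ 2) * Z ∧ Y ≤ (k / μ.im) * Z := by
    intro X Y Z hX hY h
    have p1 : 0 ≤ μ.im / 4 * X := by positivity
    have p2 : 0 ≤ 1 / (2 * k) * Y := by positivity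
    constructor
    · have := mul_le_mul_of_nonneg_left (show μ.im / 4 * X ≤ 1 / (2 * μ.im) * Z by linarith)
        (show 0 ≤ 4 / μ.im by positivity)
      calc X = 4 / μ.im * (μ.im / 4 * X) := by field_simp
        _ ≤ _ := this
        _ = _ := by field_simp; ring
    · have := mul_le_mul_of_nonneg_left (show 1 / (2 * k) * Y ≤ 1 / (2 * μ.im) * Z by linarith)
        (show 0 ≤ 2 * k by positivity)
      calc Y = 2 * k * (1 / (2 * k) * Y) := by field_simp
        _ ≤ _ := this
        _ = _ := by field_simp
  have s1 : (√2 / μ.im) ^ 2 = 2 / μ.im ^ 2 := by rw [div_pow, Real.sq_sqrt (by norm_num)]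
  have s2 : (√k / √μ.im) ^ 2 = k / μ.im := by
    rw [div_pow, Real.sq_sqrt hk0.le, Real.sq_sqrt hβ.le]
  obtain ⟨W1, W2⟩ := conc _ _ _ (nnw φ) (nnw (deriv φ)) E1
  obtain ⟨L1, L2⟩ := conc _ _ _ (nn φ) (nn (deriv φ)) E2
  refine ⟨aux_sqrt _ _ _ (by positivity) (s1 ▸ W1), aux_sqrt _ _ _ (by positivity) (s1 ▸ L1),
    aux_sqrt _ _ _ (by positivity) (s2 ▸ W2), aux_sqrt _ _ _ (by positivity) (s2 ▸ L2),
    aux_sqrt _ _ _ (by positivity) ?_⟩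
  rw [mul_pow, Real.sq_sqrt hDpos.le]
  have hZ := nn (deriv A)
  set Z := ∫ z in Set.Ioi (0 : ℝ), ‖deriv A z‖ ^ 2
  set Y := ∫ z in Set.Ioi (0 : ℝ), ‖deriv φ z‖ ^ 2
  set X := ∫ z in Set.Ioi (0 : ℝ), ‖φ z‖ ^ 2
  set W := ∫ z in Set.Ioi (0 : ℝ), ‖iteratedDeriv 2 φ z‖ ^ 2
  have hY' : (16 * (m : ℝ) ^ 2 / k ^ 2 + B / k) * Y ≤ (16 * (m : ℝ) ^ 2 + B) / μm * Z := by
    have a1 : 16 * (m : ℝ) ^ 2 / k ^ 2 ≤ 16 * (m : ℝ) ^ 2 / k :=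
      div_le_div_of_nonneg_left (by positivity) hk0 (by nlinarith)
    have a2 : (k / μ.im) * Z ≤ k / μm * Z :=
      mul_le_mul_of_nonneg_right (div_le_div_of_nonneg_left hk0.le hμm hμ) hZ
    calc _ ≤ (16 * (m : ℝ) ^ 2 / k + B / k) * (k / μm * Z) :=
          mul_le_mul (by linarith) (L2.trans a2) (nn _) (by positivity)
      _ = _ := by field_simp
  have hX' : (4 * (m : ℝ) ^ 4 / k ^ 2 + B / k) * X ≤
      (4 * (m : ℝ) ^ 4 + B) * (2 / μm ^ 2) * Z := by
    have a1 : 4 * (m : ℝ) ^ 4 / k ^ 2 ≤ 4 * (m : ℝ) ^ 4 :=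
      div_le_self (by positivity) (by nlinarith)
    have a3 : B / k ≤ B := div_le_self hB0 hk1
    have a2 : (2 / μ.im ^ 2) * Z ≤ 2 / μm ^ 2 * Z :=
      mul_le_mul_of_nonneg_right (div_le_div_of_nonneg_left (by norm_num) (by positivity)
        (pow_le_pow_left₀ hμm.le hμ 2)) hZ
    calc _ ≤ (4 * (m : ℝ) ^ 4 + B) * (2 / μm ^ 2 * Z) :=
          mul_le_mul (by linarith) (L1.trans a2) (nn _) (by positivity)
      _ = _ := by ring
  have hfin : 1 / k ^ 2 * W ≤ D * Z := by
    rw [hD]; linarith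
  have := mul_le_mul_of_nonneg_left hfin (show 0 ≤ k ^ 2 by positivity)
  calc W = k ^ 2 * (1 / k ^ 2 * W) := by field_simp
    _ ≤ _ := this
    _ = _ := by ring
end

section
/- For every μ ∈ ℂ with Re μ > 0 and Im μ > 0, the origin 0 lies in the interior of the convex hull (taken in ℂ ≅ ℝ²) of the set {μ (μ − u)^{−2} : u ∈ [0,∞)}. -/
open MeasureTheory Filter

/-- If `0` is strictly to the left of each edge of the triangle `a b c`, it is interior. -/
theorem aux_triangle (S : Set ℂ) (a b c : ℂ) (ha : a ∈ S) (hb : b ∈ S) (hc : c ∈ S)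
    (hab : 0 < a.re * b.im - a.im * b.re) (hbc : 0 < b.re * c.im - b.im * c.re)
    (hca : 0 < c.re * a.im - c.im * a.re) :
    (0 : ℂ) ∈ interior (convexHull ℝ S) := by
  let f : ℂ → ℂ → ℂ → ℝ := fun p q z =>
    (p.re - z.re) * (q.im - z.im) - (p.im - z.im) * (q.re - z.re)
  have hf : ∀ p q, Continuous (f p q) := fun p q => by
    have h1 := Complex.continuous_re
    have h2 := Complex.continuous_im
    dsimp only [f]
    fun_prop
  rw [mem_interior]
  refine ⟨{z | 0 < f b c z} ∩ {z | 0 < f c a z} ∩ {z | 0 < f a b z}, ?_, ?_, ?_⟩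
  · rintro z ⟨⟨h1, h2⟩, h3⟩
    simp only [Set.mem_ofPred_eq] at h1 h2 h3
    have hD : 0 < f b c z + f c a z + f a b z := by positivity
    set D := f b c z + f c a z + f a b z with hDdef
    have hconv := convex_convexHull ℝ S
    have hz : z = (f b c z / D) • a + (f c a z / D) • b + (f a b z / D) • c := by
      apply Complex.ext
      · simp only [Complex.add_re, Complex.real_smul, Complex.mul_re, Complex.ofReal_re,
          Complex.ofReal_im, zero_mul, sub_zero]
        field_simp
        simp only [hDdef, f]
        ring
      · simp only [Complex.add_im, Complex.real_smul, Complex.mul_im, Complex.ofReal_re,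
          Complex.ofReal_im, zero_mul, add_zero]
        field_simp
        simp only [hDdef, f]
        ring
    have hsum : f b c z / D + f c a z / D + f a b z / D = 1 := by
      rw [← add_div, ← add_div]
      exact div_self hD.ne'
    have hmem := hconv.sum_mem (t := Finset.univ) (w := ![f b c z / D, f c a z / D, f a b z / D])
      (z := ![a, b, c])
      (by intro i _; fin_cases i <;> simp <;> positivity)
      (by simpa [Fin.sum_univ_three] using hsum)
      (by
        intro i _
        fin_cases i
        · exact subset_convexHull ℝ S ha
        · exact subset_convexHull ℝ S hb
        · exact subset_convexHull ℝ S hc)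
    rw [Fin.sum_univ_three] at hmem
    exact hz.symm ▸ (show (f b c z / D) • a + (f c a z / D) • b + (f a b z / D) • c ∈ convexHull ℝ S from hmem)
  · exact ((isOpen_lt continuous_const (hf b c)).inter
      (isOpen_lt continuous_const (hf c a))).inter (isOpen_lt continuous_const (hf a b))
  · simp only [Set.mem_inter_iff, Set.mem_ofPred_eq, f, Complex.zero_re, Complex.zero_im, sub_zero]
    exact ⟨⟨hbc, hca⟩, hab⟩

theorem aux_cross (μ : ℂ) (him : 0 < μ.im) (u v : ℝ)
    (h : 0 < ((μ.re - v) - (μ.re - u)) * ((μ.re - u) * (μ.re - v) + μ.im ^ 2)) :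
    0 < (μ * ((μ - (u : ℂ)) ^ 2)⁻¹).re * (μ * ((μ - (v : ℂ)) ^ 2)⁻¹).im
      - (μ * ((μ - (u : ℂ)) ^ 2)⁻¹).im * (μ * ((μ - (v : ℂ)) ^ 2)⁻¹).re := by
  have key : ∀ u : ℝ, ∃ r : ℝ, 0 < r ∧
      (μ * ((μ - (u : ℂ)) ^ 2)⁻¹).re =
        r * (μ.re * ((μ.re - u) ^ 2 - μ.im ^ 2) + μ.im * (2 * (μ.re - u) * μ.im)) ∧
      (μ * ((μ - (u : ℂ)) ^ 2)⁻¹).im =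
        r * (μ.im * ((μ.re - u) ^ 2 - μ.im ^ 2) - μ.re * (2 * (μ.re - u) * μ.im)) := by
    intro u
    have hne : (μ - (u : ℂ)) ^ 2 ≠ 0 := by
      apply pow_ne_zero
      intro h0
      have := congrArg Complex.im h0
      simp at this
      exact him.ne' this
    refine ⟨(Complex.normSq ((μ - (u : ℂ)) ^ 2))⁻¹, inv_pos.2 (Complex.normSq_pos.2 hne), ?_, ?_⟩
    · rw [Complex.mul_re, Complex.inv_re, Complex.inv_im]
      simp only [pow_two, Complex.mul_re, Complex.mul_im, Complex.sub_re, Complex.sub_im,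
        Complex.ofReal_re, Complex.ofReal_im]
      ring
    · rw [Complex.mul_im, Complex.inv_re, Complex.inv_im]
      simp only [pow_two, Complex.mul_re, Complex.mul_im, Complex.sub_re, Complex.sub_im,
        Complex.ofReal_re, Complex.ofReal_im]
      ring
  obtain ⟨r, hr, h1, h2⟩ := key u
  obtain ⟨s, hs, h3, h4⟩ := key v
  rw [h1, h2, h3, h4]
  have hpos : 0 < r * s * (μ.re ^ 2 + μ.im ^ 2) * (2 * μ.im) *
      (((μ.re - v) - (μ.re - u)) * ((μ.re - u) * (μ.re - v) + μ.im ^ 2)) := by positivity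
  refine hpos.trans_eq ?_
  ring

/-- for `μ` in the open first quadrant, `0` lies in the interior of the
convex hull of `q_μ([0,∞))` where `q_μ(u) = μ (μ-u)⁻²`. -/
theorem zero_mem_interior_convexHull_qmu
    (μ : ℂ) (hre : 0 < μ.re) (him : 0 < μ.im) :
    (0 : ℂ) ∈ interior (convexHull ℝ
      ((fun u : ℝ => μ * ((μ - (u : ℂ)) ^ 2)⁻¹) '' Set.Ici 0)) := by
  have hd : 0 < 2 * μ.im ^ 2 / μ.re := by positivity
  have hxd : μ.re * (2 * μ.im ^ 2 / μ.re) = 2 * μ.im ^ 2 := by field_simp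
  have hy : 0 < μ.im ^ 2 := by positivity
  refine aux_triangle _ _ _ _
    (Set.mem_image_of_mem _ (Set.mem_Ici.2 (le_refl (0 : ℝ))))
    (Set.mem_image_of_mem _ (Set.mem_Ici.2
      (show (0 : ℝ) ≤ μ.re + 2 * μ.im ^ 2 / μ.re by positivity)))
    (Set.mem_image_of_mem _ (Set.mem_Ici.2 hre.le)) ?_ ?_ ?_
  · apply aux_cross μ him
    apply mul_pos_of_neg_of_neg
    · linarith
    · linarith
  · apply aux_cross μ him
    apply mul_pos
    · linarith
    · linarith
  · apply aux_cross μ him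
    apply mul_pos
    · linarith
    · linarith
end

section
/- For every μ ∈ ℂ with Re μ > 0 and Im μ > 0, there exists a C^∞ shear profile V_s : [0,∞) → ℝ with V_s(0) = 0, V_s'(z) > 0 for all z ≥ 0, and V_s(z) − z converging rapidly (together with all derivatives of V_s − z) to some constant A_s as z → ∞, such that Φ_∞(μ) = 0, where Φ_∞(μ) := μ ∫₀^∞ (μ − V_s(y))^{−2} dy. In other words, for every complex number in the open first quadrant there is an admissible shear flow for which it is an infinite-frequency eigenvalue. -/
open MeasureTheory Filter

lemma bump_avg (f : ℝ → ℂ) (hf : Continuous f) (v0 : ℝ) (hv : 0 < v0) (U : Set ℂ)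
    (hU : U ∈ nhds (f v0)) :
    ∃ φ : ℝ → ℝ, ContDiff ℝ (⊤ : ℕ∞) φ ∧ (∀ v, 0 ≤ φ v) ∧ (∀ v, v ≤ 0 → φ v = 0) ∧
      (∃ R, ∀ v, R ≤ v → φ v = 0) ∧ ∫ v, φ v • f v ∈ U := by
  obtain ⟨ε, hε, hεU⟩ := Metric.mem_nhds_iff.1 hU
  obtain ⟨δ, hδ, hδf⟩ := Metric.continuous_iff.1 hf v0 (ε / 2) (half_pos hε)
  have hr : 0 < min δ v0 := lt_min hδ hv
  let B : ContDiffBump (0 : ℝ) := ⟨min δ v0 / 2, min δ v0, half_pos hr, half_lt_self hr⟩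
  have hB : B.rOut = min δ v0 := rfl
  have key := B.dist_normed_convolution_le (μ := volume) (g := f) (x₀ := v0) (ε := ε / 2)
    hf.aestronglyMeasurable (by
      intro x hx
      refine (hδf x ?_).le
      exact lt_of_lt_of_le (Metric.mem_ball.1 hx) (min_le_left _ _))
  have hz : ∀ t, min δ v0 ≤ |t| → B.normed volume t = 0 := by
    intro t ht
    rw [← Function.notMem_support, B.support_normed_eq]
    simp only [Metric.mem_ball, dist_zero_right, Real.norm_eq_abs, not_lt]
    exact ht
  refine ⟨fun v => B.normed volume (v0 - v), ?_, fun v => B.nonneg_normed _, ?_, ?_, ?_⟩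
  · exact B.contDiff_normed.comp (contDiff_const.sub contDiff_id)
  · intro v h
    apply hz
    rw [abs_of_pos (by linarith)]
    exact (min_le_right _ _).trans (by linarith)
  · refine ⟨2 * v0, fun v h => hz _ ?_⟩
    rw [abs_of_neg (by linarith)]
    exact (min_le_right _ _).trans (by linarith)
  · apply hεU
    rw [Metric.mem_ball]
    refine lt_of_le_of_lt ?_ (half_lt_self hε)
    have hk : ∫ v, B.normed volume (v0 - v) • f v =
        convolution (B.normed volume) f (ContinuousLinearMap.lsmul ℝ ℝ) volume v0 := by
      rw [MeasureTheory.convolution_def, ← integral_sub_left_eq_self _ volume v0]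
      simp
    rw [hk]
    exact key

lemma cone_exists (w1 w2 u : ℂ) (h1 : w1.re * u.im - w1.im * u.re < 0)
    (h2 : 0 < w2.re * u.im - w2.im * u.re) (h3 : w1.re * w2.im - w1.im * w2.re < 0) :
    ∃ c1 c2 : ℝ, 0 ≤ c1 ∧ 0 ≤ c2 ∧ c1 • w1 + c2 • w2 = u := by
  refine ⟨(u.re * w2.im - u.im * w2.re) / (w1.re * w2.im - w1.im * w2.re),
    (w1.re * u.im - w1.im * u.re) / (w1.re * w2.im - w1.im * w2.re),
    div_nonneg_of_nonpos (by linarith) h3.le, div_nonneg_of_nonpos h1.le h3.le, ?_⟩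
  have := h3.ne
  apply Complex.ext
  · simp only [Complex.add_re, Complex.add_im, Complex.smul_re, Complex.smul_im, smul_eq_mul]
    rw [div_mul_eq_mul_div, div_mul_eq_mul_div, ← add_div, div_eq_iff this]; ring
  · simp only [Complex.add_re, Complex.add_im, Complex.smul_re, Complex.smul_im, smul_eq_mul]
    rw [div_mul_eq_mul_div, div_mul_eq_mul_div, ← add_div, div_eq_iff this]; ring

lemma f_re (μ : ℂ) (v : ℝ) : (((μ - (v : ℂ)) ^ 2)⁻¹).re =
    ((μ.re - v) ^ 2 - μ.im ^ 2) / ((μ.re - v) ^ 2 + μ.im ^ 2) ^ 2 := by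
  rw [Complex.inv_re, map_pow, Complex.normSq_apply]
  simp [pow_two]

lemma f_im (μ : ℂ) (v : ℝ) : (((μ - (v : ℂ)) ^ 2)⁻¹).im =
    (- (2 * (μ.re - v) * μ.im)) / ((μ.re - v) ^ 2 + μ.im ^ 2) ^ 2 := by
  rw [Complex.inv_im, map_pow, Complex.normSq_apply]
  simp [pow_two]
  ring

lemma sub_ne (μ : ℂ) (him : 0 < μ.im) (v : ℝ) : μ - (v : ℂ) ≠ 0 := by
  intro h
  have := congrArg Complex.im h
  simp at this
  linarith

lemma cross_u (μ : ℂ) (him : 0 < μ.im) (v : ℝ) :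
    ∃ K : ℝ, 0 < K ∧ (((μ - (v : ℂ)) ^ 2)⁻¹).re * (μ⁻¹).im - (((μ - (v : ℂ)) ^ 2)⁻¹).im * (μ⁻¹).re
      = K * (μ.re ^ 2 + μ.im ^ 2 - v ^ 2) := by
  refine ⟨μ.im / (((μ.re - v) ^ 2 + μ.im ^ 2) ^ 2 * (μ.re ^ 2 + μ.im ^ 2)), by positivity, ?_⟩
  rw [f_re, f_im, Complex.inv_im, Complex.inv_re, Complex.normSq_apply]
  have h1 : (μ.re - v) ^ 2 + μ.im ^ 2 ≠ 0 := by positivity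
  have h2 : μ.re ^ 2 + μ.im ^ 2 ≠ 0 := by positivity
  rw [← pow_two, ← pow_two]
  field_simp
  ring

lemma cross_f (μ : ℂ) (him : 0 < μ.im) (v w : ℝ) :
    ∃ K : ℝ, 0 < K ∧ (((μ - (v : ℂ)) ^ 2)⁻¹).re * (((μ - (w : ℂ)) ^ 2)⁻¹).im
      - (((μ - (v : ℂ)) ^ 2)⁻¹).im * (((μ - (w : ℂ)) ^ 2)⁻¹).re
      = K * ((v - w) * ((μ.re - v) * (μ.re - w) + μ.im ^ 2)) := by
  refine ⟨2 * μ.im / (((μ.re - v) ^ 2 + μ.im ^ 2) ^ 2 * ((μ.re - w) ^ 2 + μ.im ^ 2) ^ 2),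
    by positivity, ?_⟩
  rw [f_re, f_im, f_re, f_im]
  have h1 : (μ.re - v) ^ 2 + μ.im ^ 2 ≠ 0 := by positivity
  have h2 : (μ.re - w) ^ 2 + μ.im ^ 2 ≠ 0 := by positivity
  field_simp
  ring

lemma f_cont (μ : ℂ) (him : 0 < μ.im) : Continuous fun v : ℝ => ((μ - (v : ℂ)) ^ 2)⁻¹ :=
  Continuous.inv₀ (by fun_prop) fun v => pow_ne_zero 2 (sub_ne μ him v)

lemma f_integrable (μ : ℂ) (him : 0 < μ.im) :
    Integrable fun v : ℝ => ((μ - (v : ℂ)) ^ 2)⁻¹ := by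
  have h := ((integrable_inv_one_add_sq.comp_div him.ne').comp_sub_right μ.re).const_mul
    ((μ.im ^ 2)⁻¹)
  refine h.mono' (f_cont μ him).aestronglyMeasurable (Eventually.of_forall fun v => ?_)
  rw [norm_inv, norm_pow, Complex.sq_norm, Complex.normSq_apply, ← mul_inv]
  apply le_of_eq
  congr 1
  simp
  field_simp
  ring

lemma f_integral (μ : ℂ) (him : 0 < μ.im) :
    ∫ v in Set.Ioi (0 : ℝ), ((μ - (v : ℂ)) ^ 2)⁻¹ = - μ⁻¹ := by
  have := integral_Ioi_of_hasDerivAt_of_tendsto' (a := 0) (m := (0 : ℂ))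
    (f := fun v : ℝ => (μ - (v : ℂ))⁻¹) (f' := fun v : ℝ => ((μ - (v : ℂ)) ^ 2)⁻¹)
    (fun x _ => by
      have h1 : HasDerivAt (fun v : ℝ => μ - (v : ℂ)) (-1) x := by
        simpa using (Complex.ofRealCLM.hasDerivAt (x := x)).const_sub μ
      have : HasDerivAt (fun v : ℝ => (μ - (v : ℂ))⁻¹) (- (-1) / (μ - (x : ℂ)) ^ 2) x :=
        h1.inv (sub_ne μ him x)
      rw [neg_neg, one_div] at this
      exact this) (f_integrable μ him).integrableOn
    (by
      rw [tendsto_zero_iff_norm_tendsto_zero]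
      simp only [norm_inv]
      apply Tendsto.inv_tendsto_atTop
      refine tendsto_atTop_mono (f := fun v : ℝ => v - ‖μ‖) ?_
        (tendsto_atTop_add_const_right _ _ tendsto_id)
      intro v
      have := norm_sub_norm_le (v : ℂ) μ
      rw [norm_sub_rev] at this
      refine le_trans ?_ this
      simp [le_abs_self])
  rw [this]; simp

lemma exists_h (μ : ℂ) (hre : 0 < μ.re) (him : 0 < μ.im) :
    ∃ h : ℝ → ℝ, ContDiff ℝ (⊤ : ℕ∞) h ∧ (∀ v, 0 ≤ h v) ∧ (∃ R, 0 ≤ R ∧ ∀ v, R ≤ v → h v = 0) ∧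
      Integrable (fun v : ℝ => h v • ((μ - (v : ℂ)) ^ 2)⁻¹) ∧
      ∫ v in Set.Ioi (0 : ℝ), h v • ((μ - (v : ℂ)) ^ 2)⁻¹ = μ⁻¹ := by
  set a := μ.re with ha
  set b := μ.im with hb
  set f : ℝ → ℂ := fun v : ℝ => ((μ - (v : ℂ)) ^ 2)⁻¹ with hf
  have hfc : Continuous f := f_cont μ him
  set v1 : ℝ := a + 2 * b ^ 2 / a + (a + b) with hv1
  have hq : 0 < 2 * b ^ 2 / a := by positivity
  have hv1p : 0 < v1 := by positivity
  have e1 : (f v1).re * (μ⁻¹).im - (f v1).im * (μ⁻¹).re < 0 := by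
    obtain ⟨K, hK, h⟩ := cross_u μ him v1
    rw [h]
    apply mul_neg_of_pos_of_neg hK
    have : a + b < v1 := by linarith
    nlinarith
  have e2 : 0 < (f (a / 2)).re * (μ⁻¹).im - (f (a / 2)).im * (μ⁻¹).re := by
    obtain ⟨K, hK, h⟩ := cross_u μ him (a / 2)
    rw [h]
    apply mul_pos hK
    nlinarith
  have e3 : (f v1).re * (f (a / 2)).im - (f v1).im * (f (a / 2)).re < 0 := by
    obtain ⟨K, hK, h⟩ := cross_f μ him v1 (a / 2)
    rw [h]
    apply mul_neg_of_pos_of_neg hK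
    apply mul_neg_of_pos_of_neg (by linarith)
    have : (μ.re - v1) * (μ.re - a / 2) + μ.im ^ 2 = - (a * (a + b) / 2) := by
      rw [← ha, ← hb, hv1]; field_simp; ring
    rw [this]
    have : 0 < a * (a + b) := by positivity
    linarith
  obtain ⟨φ1, s1, p1, z1, ⟨R1, r1⟩, m1⟩ := bump_avg f hfc v1 hv1p
    {w : ℂ | w.re * (μ⁻¹).im - w.im * (μ⁻¹).re < 0 ∧
      w.re * (f (a / 2)).im - w.im * (f (a / 2)).re < 0}
    (IsOpen.mem_nhds (by
      rw [Set.setOf_and]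
      exact (isOpen_lt (by fun_prop) (by fun_prop)).inter
        (isOpen_lt (by fun_prop) (by fun_prop))) ⟨e1, e3⟩)
  set w1 := ∫ v, φ1 v • f v with hw1
  obtain ⟨φ2, s2, p2, z2, ⟨R2, r2⟩, m2⟩ := bump_avg f hfc (a / 2) (by positivity)
    {w : ℂ | 0 < w.re * (μ⁻¹).im - w.im * (μ⁻¹).re ∧
      w1.re * w.im - w1.im * w.re < 0}
    (IsOpen.mem_nhds (by
      rw [Set.setOf_and]
      exact (isOpen_lt (by fun_prop) (by fun_prop)).inter
        (isOpen_lt (by fun_prop) (by fun_prop))) ⟨e2, m1.2⟩)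
  set w2 := ∫ v, φ2 v • f v with hw2
  obtain ⟨c1, c2, hc1, hc2, hc⟩ := cone_exists w1 w2 μ⁻¹ m1.1 m2.1 m2.2
  have int : ∀ φ : ℝ → ℝ, Continuous φ → (∀ v, v ≤ 0 → φ v = 0) → ∀ R, (∀ v, R ≤ v → φ v = 0) →
      Integrable (fun v => φ v • f v) := by
    intro φ hφ h0 R hR
    apply (hφ.smul hfc).integrable_of_hasCompactSupport
    apply HasCompactSupport.intro (isCompact_Icc (a := 0) (b := R))
    intro x hx
    rw [Set.mem_Icc, not_and_or] at hx
    rcases hx with hx | hx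
    · simp [h0 x (by linarith)]
    · simp [hR x (by linarith)]
  have i1 := int φ1 s1.continuous z1 R1 r1
  have i2 := int φ2 s2.continuous z2 R2 r2
  have e : (fun v : ℝ => (c1 * φ1 v + c2 * φ2 v) • f v) =
      fun v => c1 • (φ1 v • f v) + c2 • (φ2 v • f v) := by
    ext v; rw [add_smul, mul_smul, mul_smul]
  refine ⟨fun v => c1 * φ1 v + c2 * φ2 v, ?_, ?_, ?_, ?_, ?_⟩
  · exact (contDiff_const.mul s1).add (contDiff_const.mul s2)
  · intro v
    have := p1 v
    have := p2 v
    positivity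
  · refine ⟨max 0 (max R1 R2), le_max_left _ _, fun v hv => ?_⟩
    simp only [max_le_iff] at hv
    simp [r1 v hv.2.1, r2 v hv.2.2]
  · change Integrable (fun v : ℝ => (c1 * φ1 v + c2 * φ2 v) • f v)
    rw [e]
    exact (i1.smul c1).add (i2.smul c2)
  · rw [setIntegral_eq_integral_of_forall_compl_eq_zero]
    · change ∫ v : ℝ, (c1 * φ1 v + c2 * φ2 v) • f v = _
      rw [e, integral_add (f := fun v => c1 • (φ1 v • f v)) (g := fun v => c2 • (φ2 v • f v))
        (i1.smul c1) (i2.smul c2), integral_smul, integral_smul]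
      exact hc
    · intro x hx
      have hx : x ≤ 0 := by simpa using hx
      simp [z1 x hx, z2 x hx]

/-- every `μ` in the open first quadrant is an infinite-frequency
eigenvalue for some admissible shear flow `V_s`. -/
theorem exists_shear_flow_with_eigenvalue
    (μ : ℂ) (hre : 0 < μ.re) (him : 0 < μ.im) :
    ∃ (Vs : ℝ → ℝ) (As : ℝ),
      ContDiff ℝ (⊤ : ℕ∞) Vs ∧ Vs 0 = 0 ∧ (∀ z : ℝ, 0 ≤ z → 0 < deriv Vs z) ∧
      (∀ p : ℕ, Tendsto (fun z : ℝ => z ^ p * (Vs z - z - As)) atTop (nhds 0)) ∧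
      (∀ n : ℕ, 1 ≤ n → ∀ p : ℕ,
        Tendsto (fun z : ℝ => z ^ p * iteratedDeriv n (fun w => Vs w - w) z)
          atTop (nhds 0)) ∧
      μ * ∫ y in Set.Ioi (0 : ℝ), ((μ - (Vs y : ℂ)) ^ 2)⁻¹ = 0 := by
  obtain ⟨h, hs, hp, ⟨R, hR0, hR⟩, hi, hI⟩ := exists_h μ hre him
  let Y : ℝ → ℝ := fun v => v + ∫ t in (0 : ℝ)..v, h t
  have hYd : ∀ v, HasDerivAt Y (1 + h v) v := fun v =>
    (hasDerivAt_id v).add (hs.continuous.integral_hasStrictDerivAt 0 v).hasDerivAt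
  have hYs : ContDiff ℝ (⊤ : ℕ∞) Y := by
    rw [contDiff_infty_iff_deriv]
    refine ⟨fun v => (hYd v).differentiableAt, ?_⟩
    rw [show deriv Y = fun v => 1 + h v from funext fun v => (hYd v).deriv]
    exact contDiff_const.add hs
  have hpos : ∀ v, 0 < 1 + h v := fun v => by linarith [hp v]
  have hYm : StrictMono Y := strictMono_of_deriv_pos fun v => by
    rw [(hYd v).deriv]; exact hpos v
  have hY0 : Y 0 = 0 := by simp [Y]
  have hmono : Monotone fun v => ∫ t in (0 : ℝ)..v, h t := by
    refine monotone_of_deriv_nonneg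
      (fun v => (hs.continuous.integral_hasStrictDerivAt 0 v).hasDerivAt.differentiableAt)
      (fun v => ?_)
    rw [(hs.continuous.integral_hasStrictDerivAt 0 v).hasDerivAt.deriv]
    exact hp v
  have hYsurj : Function.Surjective Y := by
    apply hYs.continuous.surjective
    · refine tendsto_atTop_mono' _ ?_ tendsto_id
      filter_upwards [eventually_ge_atTop 0] with v hv
      have := hmono hv
      simp at this
      simp only [Y, id]; linarith
    · refine tendsto_atBot_mono' _ ?_ tendsto_id
      filter_upwards [eventually_le_atBot 0] with v hv
      have := hmono hv
      simp at this
      simp only [Y, id]; linarith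
  let e : ℝ ≃ₜ ℝ := (hYm.orderIsoOfSurjective Y hYsurj).toHomeomorph
  have heY : ∀ v, e v = Y v := fun v => rfl
  have hVY : ∀ v, e.symm (Y v) = v := fun v => e.symm_apply_apply v
  have hYV : ∀ z, Y (e.symm z) = z := fun z => e.apply_symm_apply z
  have hlin : ∀ v, R ≤ v → Y v = v + ∫ t in (0 : ℝ)..R, h t := by
    intro v hv
    have h0 : ∫ t in R..v, h t = 0 := by
      rw [intervalIntegral.integral_congr (g := fun _ => (0 : ℝ))]
      · simp
      · intro t ht
        rw [Set.uIcc_of_le hv] at ht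
        exact hR t ht.1
    simp only [Y]
    rw [← intervalIntegral.integral_add_adjacent_intervals
      (hs.continuous.intervalIntegrable 0 R) (hs.continuous.intervalIntegrable R v), h0, add_zero]
  have hVlin : ∀ z, Y R ≤ z → e.symm z - z = - ∫ t in (0 : ℝ)..R, h t := by
    intro z hz
    have h1 : R ≤ e.symm z := by
      rw [← hYm.le_iff_le, hYV]; exact hz
    have h2 := hlin _ h1
    rw [hYV] at h2
    linarith
  refine ⟨e.symm, - ∫ t in (0 : ℝ)..R, h t, ?_, ?_, ?_, ?_, ?_, ?_⟩
  · exact e.contDiff_symm_deriv (fun v => (hpos v).ne') hYd hYs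
  · have := hVY 0
    rwa [hY0] at this
  · intro z _
    have := HasDerivAt.of_local_left_inverse (f := Y) (g := e.symm) (a := z)
      e.symm.continuous.continuousAt (hYd (e.symm z)) (hpos _).ne'
      (Eventually.of_forall hYV)
    rw [this.deriv]
    exact inv_pos.2 (hpos _)
  · intro p
    apply tendsto_const_nhds.congr'
    filter_upwards [eventually_ge_atTop (Y R)] with z hz
    rw [hVlin z hz]; simp
  · intro n hn p
    apply tendsto_const_nhds.congr'
    filter_upwards [eventually_gt_atTop (Y R)] with z hz
    have : (fun w => e.symm w - w) =ᶠ[nhds z] fun _ => - ∫ t in (0 : ℝ)..R, h t := by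
      filter_upwards [eventually_gt_nhds hz] with w hw
      exact hVlin w hw.le
    rw [this.iteratedDeriv_eq n, iteratedDeriv_const, if_neg (by omega), mul_zero]
  · have himg : Y '' Set.Ioi 0 = Set.Ioi 0 := by
      ext z
      constructor
      · rintro ⟨v, hv, rfl⟩
        have := hYm (Set.mem_Ioi.1 hv)
        rwa [hY0] at this
      · intro hz
        refine ⟨e.symm z, ?_, hYV z⟩
        rw [Set.mem_Ioi, ← hYm.lt_iff_lt, hYV, hY0]
        exact hz
    have := integral_image_eq_integral_abs_deriv_smul (s := Set.Ioi (0 : ℝ)) measurableSet_Ioi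
      (fun v _ => (hYd v).hasDerivWithinAt) hYm.injective.injOn
      (fun y => ((μ - ((e.symm y : ℝ) : ℂ)) ^ 2)⁻¹)
    rw [himg] at this
    rw [this]
    have e2 : ∀ v : ℝ, |1 + h v| • ((μ - ((e.symm (Y v) : ℝ) : ℂ)) ^ 2)⁻¹ =
        ((μ - (v : ℂ)) ^ 2)⁻¹ + h v • ((μ - (v : ℂ)) ^ 2)⁻¹ := by
      intro v
      rw [hVY, abs_of_pos (hpos v), add_smul, one_smul]
    simp only [e2]
    rw [integral_add (f_integrable μ him).integrableOn hi.integrableOn, f_integral μ him, hI]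
    simp
end

section
/- There exists a C^∞ shear profile V_s : [0,∞) → ℝ with V_s(0) = 0, V_s'(z) > 0 for all z ≥ 0, and V_s(z) − z converging rapidly (together with all derivatives of V_s − z) to some constant A_s as z → ∞, such that the associated function g is strictly monotone in a neighborhood of each of its positive zeroes and n₊ − n₋ ≠ 0. Consequently, there exist monotone shear flows for which the linearized triple deck model is unstable below analytic regularity. -/
open MeasureTheory Filter

/-- `HasPV g a L` : the principal value `PV ∫₀^∞ g(u)/(a-u) du` exists and equals `L`. -/
def HasPV (g : ℝ → ℝ) (a L : ℝ) : Prop :=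
  Filter.Tendsto (fun ε : ℝ => ∫ u in {u : ℝ | 0 < u ∧ ε < |u - a|}, g u / (a - u))
    (nhdsWithin 0 (Set.Ioi 0)) (nhds L)

/-- The set whose cardinality is `n₊`: positive zeroes `a` of `g` with
`-1/V_s'(0) + a · PV∫₀^∞ g(u)/(a-u) du > 0` near which `g` is strictly increasing. -/
def Splus (Vs g : ℝ → ℝ) : Set ℝ :=
  {a : ℝ | 0 < a ∧ g a = 0 ∧
    (∃ L : ℝ, HasPV g a L ∧ 0 < -1 / deriv Vs 0 + a * L) ∧
    ∃ ε > (0 : ℝ), StrictMonoOn g (Set.Ioo (a - ε) (a + ε))}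

/-- The set whose cardinality is `n₋`: same but with `g` strictly decreasing near `a`. -/
def Sminus (Vs g : ℝ → ℝ) : Set ℝ :=
  {a : ℝ | 0 < a ∧ g a = 0 ∧
    (∃ L : ℝ, HasPV g a L ∧ 0 < -1 / deriv Vs 0 + a * L) ∧
    ∃ ε > (0 : ℝ), StrictAntiOn g (Set.Ioo (a - ε) (a + ε))}

noncomputable section Aux

/-- The Gaussian. -/
def EE (u : ℝ) : ℝ := Real.exp (-(u - 2) ^ 2)

/-- derivative of the inverse profile. -/
def hh (u : ℝ) : ℝ := 1 - EE u / 2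

/-- the inverse profile. -/
def WW (u : ℝ) : ℝ := ∫ s in (0 : ℝ)..u, hh s

theorem EE_pos (u : ℝ) : 0 < EE u := Real.exp_pos _

theorem EE_le (u : ℝ) : EE u ≤ 1 := by
  unfold EE
  rw [Real.exp_le_one_iff]
  nlinarith [sq_nonneg (u - 2)]

theorem hh_ge (u : ℝ) : 1 / 2 ≤ hh u := by
  unfold hh; linarith [EE_le u]

theorem hh_pos (u : ℝ) : 0 < hh u := by linarith [hh_ge u]

theorem hh_lt (u : ℝ) : hh u < 1 := by
  unfold hh; linarith [EE_pos u]

theorem EE_contDiff : ContDiff ℝ (⊤ : ℕ∞) EE := by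
  unfold EE; fun_prop

theorem hh_contDiff : ContDiff ℝ (⊤ : ℕ∞) hh := by
  unfold hh
  exact contDiff_const.sub (EE_contDiff.div_const 2)

theorem EE_hasDeriv (u : ℝ) : HasDerivAt EE (EE u * (-(2 * (u - 2)))) u := by
  have h1 : HasDerivAt (fun u : ℝ => -(u - 2) ^ 2) (-(2 * (u - 2))) u := by
    have := (((hasDerivAt_id u).sub_const 2).pow 2).neg
    exact this.congr_deriv (by simp)
  exact h1.exp

theorem hh_hasDeriv (u : ℝ) : HasDerivAt hh ((u - 2) * EE u) u := by
  have := ((EE_hasDeriv u).div_const 2).const_sub 1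
  exact this.congr_deriv (by ring)

theorem WW_hasDeriv (u : ℝ) : HasDerivAt WW (hh u) u := by
  have hc : Continuous hh := hh_contDiff.continuous
  exact intervalIntegral.integral_hasDerivAt_right (hc.intervalIntegrable _ _)
    (hc.stronglyMeasurableAtFilter _ _) hc.continuousAt

theorem WW_zero : WW 0 = 0 := by simp [WW]

theorem WW_contDiff : ContDiff ℝ (⊤ : ℕ∞) WW := by
  have hd : deriv WW = hh := funext fun u => (WW_hasDeriv u).deriv
  have : ContDiff ℝ ((⊤ : ℕ∞) : WithTop ℕ∞) WW := by
    rw [contDiff_infty_iff_deriv]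
    refine ⟨fun u => (WW_hasDeriv u).differentiableAt, ?_⟩
    rw [hd]; exact hh_contDiff
  exact this

theorem WW_strictMono : StrictMono WW :=
  strictMono_of_hasDerivAt_pos WW_hasDeriv hh_pos

theorem WW_cont : Continuous WW := WW_contDiff.continuous

theorem WW_sub_mono : Monotone (fun u => WW u - u / 2) := by
  apply monotone_of_hasDerivAt_nonneg (f' := fun u => hh u - 1 / 2)
  · intro u
    exact (WW_hasDeriv u).sub ((hasDerivAt_id u).div_const 2)
  · intro u
    have := hh_ge u
    simp only [Pi.zero_apply]
    linarith

theorem sub_WW_mono : Monotone (fun u => u - WW u) := by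
  apply monotone_of_hasDerivAt_nonneg (f' := fun u => 1 - hh u)
  · intro u
    exact (hasDerivAt_id u).sub (WW_hasDeriv u)
  · intro u
    have := hh_lt u
    simp only [Pi.zero_apply]
    linarith

theorem WW_surj : Function.Surjective WW := by
  apply WW_cont.surjective
  · apply tendsto_atTop_mono' atTop (f₁ := fun u : ℝ => u / 2)
    · filter_upwards [eventually_ge_atTop 0] with u hu
      have := WW_sub_mono hu
      simp only [WW_zero] at this
      linarith
    · exact tendsto_id.atTop_div_const (by norm_num)
  · apply tendsto_atBot_mono' atBot (f₁ := fun u : ℝ => u / 2)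
    · filter_upwards [eventually_le_atBot 0] with u hu
      have := WW_sub_mono hu
      simp only [WW_zero] at this
      linarith
    · exact tendsto_id.atBot_div_const (by norm_num)

def WH : ℝ ≃ₜ ℝ := (WW_strictMono.orderIsoOfSurjective WW WW_surj).toHomeomorph

theorem WH_apply (u : ℝ) : WH u = WW u := rfl

/-- the profile -/
def VV (z : ℝ) : ℝ := WH.symm z

theorem WW_VV (z : ℝ) : WW (VV z) = z := WH.apply_symm_apply z

theorem VV_zero : VV 0 = 0 := by
  apply WW_strictMono.injective
  rw [WW_VV, WW_zero]

theorem VV_contDiff : ContDiff ℝ (⊤ : ℕ∞) VV :=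
  WH.contDiff_symm_deriv (fun x => (hh_pos x).ne') WW_hasDeriv WW_contDiff

theorem VV_hasDeriv (z : ℝ) : HasDerivAt VV (hh (VV z))⁻¹ z := by
  apply HasDerivAt.of_local_left_inverse (f := WW)
  · exact VV_contDiff.continuous.continuousAt
  · exact WW_hasDeriv _
  · exact (hh_pos _).ne'
  · exact Eventually.of_forall WW_VV

theorem VV_deriv : deriv VV = fun z => (hh (VV z))⁻¹ := funext fun z => (VV_hasDeriv z).deriv

theorem VV_ge {z : ℝ} (hz : 0 ≤ z) : z ≤ VV z := by
  have h0 : 0 ≤ VV z := by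
    rw [← WW_strictMono.le_iff_le, WW_VV, WW_zero]; exact hz
  have := sub_WW_mono h0
  simp only [WW_zero, WW_VV] at this
  linarith

theorem VV_tendsto : Tendsto VV atTop atTop := by
  apply tendsto_atTop_mono' atTop (f₁ := fun z : ℝ => z) _ tendsto_id
  filter_upwards [eventually_ge_atTop 0] with z hz using VV_ge hz

inductive Cls : (ℝ → ℝ) → Prop
  | const (c : ℝ) : Cls (fun _ => c)
  | id : Cls (fun u => u)
  | E : Cls EE
  | hinv : Cls (fun u => (hh u)⁻¹)
  | add {a b : ℝ → ℝ} : Cls a → Cls b → Cls (fun u => a u + b u)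
  | mul {a b : ℝ → ℝ} : Cls a → Cls b → Cls (fun u => a u * b u)

theorem Cls.hasDeriv {r : ℝ → ℝ} (hr : Cls r) :
    ∃ r' : ℝ → ℝ, Cls r' ∧ ∀ u, HasDerivAt r (r' u) u := by
  induction hr with
  | const c => exact ⟨_, Cls.const 0, fun u => hasDerivAt_const u c⟩
  | id => exact ⟨_, Cls.const 1, fun u => hasDerivAt_id u⟩
  | E =>
    refine ⟨_, Cls.mul Cls.E (Cls.mul (Cls.const (-2)) (Cls.add Cls.id (Cls.const (-2)))), ?_⟩
    intro u
    exact (EE_hasDeriv u).congr_deriv (by ring)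
  | hinv =>
    refine ⟨_, Cls.mul (Cls.mul (Cls.add (Cls.const 2) (Cls.mul (Cls.const (-1)) Cls.id)) Cls.E)
      (Cls.mul Cls.hinv Cls.hinv), ?_⟩
    intro u
    refine ((hh_hasDeriv u).inv (hh_pos u).ne').congr_deriv ?_
    have := (hh_pos u).ne'
    field_simp
    ring
  | add _ _ iha ihb =>
    obtain ⟨a', ha, ha'⟩ := iha
    obtain ⟨b', hb, hb'⟩ := ihb
    exact ⟨_, ha.add hb, fun u => (ha' u).add (hb' u)⟩
  | mul h1 h2 iha ihb =>
    obtain ⟨a', ha, ha'⟩ := iha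
    obtain ⟨b', hb, hb'⟩ := ihb
    exact ⟨_, (ha.mul h2).add (h1.mul hb), fun u => (ha' u).mul (hb' u)⟩

theorem bdd_bigO {f : ℝ → ℝ} (C : ℝ) (hf : ∀ u, |f u| ≤ C) (c : ℝ) (hc : 0 < c) :
    f =O[atTop] fun u => Real.exp (c * u) := by
  apply Asymptotics.IsBigO.of_bound C
  filter_upwards [eventually_ge_atTop 0] with u hu
  have h1 : 1 ≤ Real.exp (c * u) := Real.one_le_exp (by positivity)
  have h2 := hf u
  have h3 := abs_nonneg (f u)
  rw [Real.norm_eq_abs, Real.norm_eq_abs, abs_of_pos (Real.exp_pos _)]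
  nlinarith

theorem Cls.bigO {r : ℝ → ℝ} (hr : Cls r) :
    ∀ c : ℝ, 0 < c → r =O[atTop] fun u => Real.exp (c * u) := by
  induction hr with
  | const c => exact bdd_bigO |c| (fun u => le_rfl)
  | id =>
    intro c hc
    have := (isLittleO_pow_exp_pos_mul_atTop 1 hc).isBigO
    simpa using this
  | E => exact bdd_bigO 1 (fun u => by rw [abs_of_pos (EE_pos u)]; exact EE_le u)
  | hinv =>
    refine bdd_bigO 2 (fun u => ?_)
    rw [abs_of_pos (inv_pos.2 (hh_pos u))]
    rw [inv_le_comm₀ (hh_pos u) (by norm_num)]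
    have := hh_ge u
    linarith
  | add _ _ iha ihb => exact fun c hc => (iha c hc).add (ihb c hc)
  | mul _ _ iha ihb =>
    intro c hc
    have := (iha (c / 2) (by linarith)).mul (ihb (c / 2) (by linarith))
    refine this.congr_right ?_
    intro u
    rw [← Real.exp_add]
    ring_nf

theorem Cls.tendsto {r : ℝ → ℝ} (hr : Cls r) :
    Tendsto (fun u => EE u * r u) atTop (nhds 0) := by
  have h1 := (Asymptotics.isBigO_refl EE atTop).mul (hr.bigO 1 one_pos)
  refine h1.trans_tendsto ?_
  have h2 : (fun u => EE u * Real.exp (1 * u)) = fun u => Real.exp (-(u - 2) ^ 2 + u) := by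
    funext u
    rw [EE, Real.exp_add, one_mul]
  rw [h2]
  apply Real.tendsto_exp_atBot.comp
  apply tendsto_atBot_mono' atTop (f₁ := fun u : ℝ => -u + 10)
  · filter_upwards with u
    nlinarith [sq_nonneg (u - 3)]
  · exact tendsto_atBot_add_const_right _ _ tendsto_neg_atTop_atBot

theorem Cls.pow_mul {r : ℝ → ℝ} (hr : Cls r) (p : ℕ) : Cls (fun u => u ^ p * r u) := by
  induction p with
  | zero => simpa using hr
  | succ p ih =>
    have := Cls.id.mul ih
    convert this using 2
    ring

theorem tendsto_comp {f : ℝ → ℝ} (p : ℕ)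
    (hf : Tendsto (fun u => u ^ p * f u) atTop (nhds 0)) :
    Tendsto (fun z => z ^ p * f (VV z)) atTop (nhds 0) := by
  have h1 := (hf.comp VV_tendsto).abs
  rw [abs_zero] at h1
  refine squeeze_zero_norm' ?_ h1
  filter_upwards [eventually_ge_atTop 0] with z hz
  have := VV_ge hz
  simp only [Function.comp, Real.norm_eq_abs, abs_mul, abs_pow]
  have h2 : |z| ≤ |VV z| := by rwa [abs_of_nonneg hz, abs_of_nonneg (hz.trans this)]
  gcongr

theorem Cls.tendsto_V {q : ℝ → ℝ} (hq : Cls q) (p : ℕ) :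
    Tendsto (fun z => z ^ p * (EE (VV z) * q (VV z))) atTop (nhds 0) := by
  apply tendsto_comp (f := fun u => EE u * q u)
  refine (hq.pow_mul p).tendsto.congr ?_
  intro u; ring

theorem iter_form (n : ℕ) : ∃ q, Cls q ∧
    iteratedDeriv (n + 1) (fun w => VV w - w) = fun z => EE (VV z) * q (VV z) := by
  induction n with
  | zero =>
    refine ⟨_, (Cls.const (1 / 2)).mul Cls.hinv, ?_⟩
    rw [zero_add, iteratedDeriv_one]
    funext z
    have h := ((VV_hasDeriv z).sub (hasDerivAt_id z)).deriv
    refine Eq.trans h ?_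
    have h0 := (hh_pos (VV z)).ne'
    field_simp
    simp only [hh]
    ring
  | succ n ih =>
    obtain ⟨q, hq, he⟩ := ih
    obtain ⟨q', hq', hd⟩ := hq.hasDeriv
    refine ⟨_, (((Cls.const (-2)).mul (Cls.id.add (Cls.const (-2)))).mul hq |>.add hq').mul
      Cls.hinv, ?_⟩
    rw [iteratedDeriv_succ, he]
    funext z
    have h := (((EE_hasDeriv (VV z)).mul (hd (VV z))).comp z (VV_hasDeriv z)).deriv
    refine Eq.trans h ?_
    ring

theorem EE_integrable : Integrable EE := by
  have h := (integrable_exp_neg_mul_sq (b := 1) one_pos).comp_sub_right 2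
  refine h.congr (Eventually.of_forall fun u => ?_)
  simp [EE]

theorem sub_WW (u : ℝ) : u - WW u = (∫ s in (0 : ℝ)..u, EE s) / 2 := by
  have hc : Continuous EE := EE_contDiff.continuous
  have : WW u = (∫ s in (0 : ℝ)..u, (1 : ℝ)) - ∫ s in (0 : ℝ)..u, EE s / 2 := by
    rw [← intervalIntegral.integral_sub]
    · rfl
    · exact intervalIntegrable_const
    · exact (hc.div_const 2).intervalIntegrable _ _
  rw [this, intervalIntegral.integral_div]
  simp

def AA : ℝ := (∫ s in Set.Ioi (0 : ℝ), EE s) / 2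

theorem sub_WW_tendsto : Tendsto (fun u => u - WW u) atTop (nhds AA) := by
  simp only [sub_WW]
  exact (intervalIntegral_tendsto_integral_Ioi 0 EE_integrable.integrableOn tendsto_id).div_const 2

theorem EE_tendsto : Tendsto EE atTop (nhds 0) := by
  simpa using (Cls.const 1).tendsto

theorem tail_bound {u : ℝ} (hu : 3 ≤ u) : |u - WW u - AA| ≤ |EE u| := by
  have h1 : u - WW u ≤ AA := sub_WW_mono.ge_of_tendsto sub_WW_tendsto u
  have hanti : AntitoneOn (fun v => EE v + (v - WW v)) (Set.Ici 3) := by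
    have hd : ∀ v, HasDerivAt (fun v => EE v + (v - WW v))
        (EE v * (-(2 * (v - 2))) + (1 - hh v)) v := fun v =>
      (EE_hasDeriv v).add ((hasDerivAt_id v).sub (WW_hasDeriv v))
    apply antitoneOn_of_deriv_nonpos (convex_Ici 3)
    · exact fun v _ => (hd v).continuousAt.continuousWithinAt
    · exact fun v _ => (hd v).differentiableAt.differentiableWithinAt
    · intro v hv
      rw [interior_Ici] at hv
      rw [(hd v).deriv]
      have hv' : (3 : ℝ) < v := hv
      have := EE_pos v
      simp only [hh]
      nlinarith
  have ht : Tendsto (fun v => EE v + (v - WW v)) atTop (nhds (0 + AA)) :=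
    EE_tendsto.add sub_WW_tendsto
  have h2 : 0 + AA ≤ EE u + (u - WW u) := by
    refine le_of_tendsto ht ?_
    filter_upwards [eventually_ge_atTop u] with v hv
    exact hanti hu (hu.trans hv) hv
  rw [abs_of_pos (EE_pos u), abs_le]
  constructor <;> linarith [EE_pos u]

theorem V_sub_tendsto (p : ℕ) :
    Tendsto (fun z : ℝ => z ^ p * (VV z - z - AA)) atTop (nhds 0) := by
  have h : Tendsto (fun u => u ^ p * (u - WW u - AA)) atTop (nhds 0) := by
    have h1 := ((Cls.const 1).pow_mul p).tendsto.abs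
    rw [abs_zero] at h1
    refine squeeze_zero_norm' ?_ h1
    filter_upwards [eventually_ge_atTop 3] with u hu
    rw [Real.norm_eq_abs, mul_one, abs_mul, abs_mul, mul_comm]
    exact mul_le_mul_of_nonneg_right (tail_bound hu) (abs_nonneg _)
  have := tendsto_comp p h
  simpa only [WW_VV] using this

/-- the function `g`. -/
def gg (u : ℝ) : ℝ := (2 - u) * EE u

theorem gg_V (z : ℝ) : gg (VV z) = deriv (deriv VV) z / (deriv VV z) ^ 3 := by
  have h0 := (hh_pos (VV z)).ne'
  have h : HasDerivAt (deriv VV)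
      (-((VV z - 2) * EE (VV z)) / hh (VV z) ^ 2 * (hh (VV z))⁻¹) z := by
    rw [VV_deriv]
    exact ((hh_hasDeriv (VV z)).inv h0).comp z (VV_hasDeriv z)
  rw [h.deriv, VV_deriv]
  simp only [gg]
  field_simp
  ring

theorem gg_zero {a : ℝ} (h : gg a = 0) : a = 2 := by
  rcases mul_eq_zero.1 h with h | h
  · linarith
  · exact absurd h (EE_pos a).ne'

theorem gg_anti : StrictAntiOn gg (Set.Ioo (2 - 1 / 2) (2 + 1 / 2)) := by
  have hd : ∀ v, HasDerivAt gg ((-1) * EE v + (2 - v) * (EE v * (-(2 * (v - 2))))) v := fun v =>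
    ((hasDerivAt_id v).const_sub 2).mul (EE_hasDeriv v)
  apply strictAntiOn_of_deriv_neg (convex_Ioo _ _)
  · exact fun v _ => (hd v).continuousAt.continuousWithinAt
  · intro v hv
    rw [interior_Ioo] at hv
    rw [(hd v).deriv]
    obtain ⟨h1, h2⟩ := hv
    have h3 : (-1) * EE v + (2 - v) * (EE v * (-(2 * (v - 2))))
      = EE v * (-1 + 2 * (v - 2) ^ 2) := by ring
    rw [h3]
    apply mul_neg_of_pos_of_neg (EE_pos v)
    nlinarith

theorem gg_PV : HasPV gg 2 (∫ u in Set.Ioi (0 : ℝ), EE u) := by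
  have hm : ∀ ε : ℝ, MeasurableSet {u : ℝ | 0 < u ∧ ε < |u - 2|} := by
    intro ε
    apply IsOpen.measurableSet
    exact (isOpen_lt continuous_const continuous_id).inter
      (isOpen_lt continuous_const (continuous_id.sub continuous_const).abs)
  unfold HasPV
  rw [← integral_indicator measurableSet_Ioi]
  simp_rw [fun ε => (integral_indicator (μ := volume)
    (f := fun u : ℝ => gg u / (2 - u)) (hm ε)).symm]
  have key : ∀ u : ℝ, u ≠ 2 → gg u / (2 - u) = EE u := by
    intro u hu
    have : 2 - u ≠ 0 := sub_ne_zero.2 hu.symm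
    simp only [gg]
    field_simp
  have hbd : ∀ u : ℝ, |gg u / (2 - u)| ≤ EE u := by
    intro u
    by_cases hu : u = 2
    · subst hu; simp [(EE_pos 2).le]
    · rw [key u hu, abs_of_pos (EE_pos u)]
  have hcg : Measurable gg := by
    have : Measurable EE := EE_contDiff.continuous.measurable
    unfold gg
    fun_prop
  apply tendsto_integral_filter_of_dominated_convergence EE
  · refine Eventually.of_forall fun ε => ?_
    apply Measurable.aestronglyMeasurable
    apply Measurable.indicator _ (hm ε)
    fun_prop
  · refine Eventually.of_forall fun ε => Eventually.of_forall fun u => ?_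
    refine (norm_indicator_le_norm_self _ _).trans ?_
    exact hbd u
  · exact EE_integrable
  · have hne : ∀ᵐ u : ℝ, u ≠ 2 := by
      simp [ae_iff, measure_singleton]
    filter_upwards [hne] with u hu
    apply tendsto_const_nhds.congr'
    have hpos : 0 < |u - 2| := abs_pos.2 (sub_ne_zero.2 hu)
    filter_upwards [nhdsWithin_le_nhds (Iio_mem_nhds hpos)] with ε hε
    have hε' : ε < |u - 2| := hε
    by_cases h0 : 0 < u
    · rw [Set.indicator_of_mem (show u ∈ Set.Ioi (0 : ℝ) from h0), Set.indicator_of_mem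
        (show u ∈ {u : ℝ | 0 < u ∧ ε < |u - 2|} from ⟨h0, hε'⟩), key u hu]
    · rw [Set.indicator_of_notMem (show u ∉ Set.Ioi (0 : ℝ) from h0), Set.indicator_of_notMem
        (show u ∉ {u : ℝ | 0 < u ∧ ε < |u - 2|} from fun h => h0 h.1)]

theorem L_lower : 1 / 2 < ∫ u in Set.Ioi (0 : ℝ), EE u := by
  have h1 : ∫ u in Set.Icc (1 : ℝ) 3, EE u ≤ ∫ u in Set.Ioi (0 : ℝ), EE u := by
    apply setIntegral_mono_set EE_integrable.integrableOn
    · exact Eventually.of_forall fun u => (EE_pos u).le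
    · apply LE.le.eventuallyLE
      intro u hu
      exact lt_of_lt_of_le one_pos hu.1
  have h2 : ∫ u in Set.Icc (1 : ℝ) 3, (Real.exp (-1)) ≤ ∫ u in Set.Icc (1 : ℝ) 3, EE u := by
    apply setIntegral_mono_on _ EE_integrable.integrableOn measurableSet_Icc
    · intro u hu
      unfold EE
      apply Real.exp_le_exp.2
      nlinarith [hu.1, hu.2]
    · exact integrableOn_const (by simp)
  have h3 : ∫ u in Set.Icc (1 : ℝ) 3, (Real.exp (-1)) = 2 * Real.exp (-1) := by
    simp
    norm_num
  have h4 : 1 / 3 < Real.exp (-1) := by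
    rw [Real.exp_neg, ← one_div]
    apply one_div_lt_one_div_of_lt (Real.exp_pos _)
    linarith [Real.exp_one_lt_d9]
  linarith

theorem Splus_empty : Splus VV gg = ∅ := by
  ext a
  simp only [Set.mem_empty_iff_false, iff_false]
  rintro ⟨_, h0, _, ε, hε, hm⟩
  have := gg_zero h0
  subst this
  have h := hm (a := 2) (b := 2 + ε / 2) ⟨by linarith, by linarith⟩
    ⟨by linarith, by linarith⟩ (by linarith)
  rw [h0] at h
  simp only [gg] at h
  nlinarith [EE_pos (2 + ε / 2)]

theorem Sminus_eq : Sminus VV gg = {2} := by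
  ext a
  simp only [Set.mem_singleton_iff]
  constructor
  · rintro ⟨_, h0, _⟩
    exact gg_zero h0
  · rintro rfl
    refine ⟨by norm_num, by simp [gg], ⟨_, gg_PV, ?_⟩, 1 / 2, by norm_num, gg_anti⟩
    rw [VV_deriv]
    simp only [VV_zero, div_inv_eq_mul]
    linarith [L_lower, hh_lt 0]

end Aux


/-- there is an admissible shear profile `V_s` whose associated function
`g` is strictly monotone near each of its positive zeroes and satisfies `n₊ - n₋ ≠ 0`. -/
theorem exists_unstable_shear_flow :
    ∃ (Vs : ℝ → ℝ) (As : ℝ),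
      ContDiff ℝ (⊤ : ℕ∞) Vs ∧ Vs 0 = 0 ∧ (∀ z : ℝ, 0 ≤ z → 0 < deriv Vs z) ∧
      (∀ p : ℕ, Tendsto (fun z : ℝ => z ^ p * (Vs z - z - As)) atTop (nhds 0)) ∧
      (∀ n : ℕ, 1 ≤ n → ∀ p : ℕ,
        Tendsto (fun z : ℝ => z ^ p * iteratedDeriv n (fun w => Vs w - w) z)
          atTop (nhds 0)) ∧
      ∃ g : ℝ → ℝ,
        (∀ z : ℝ, 0 ≤ z → g (Vs z) = deriv (deriv Vs) z / (deriv Vs z) ^ 3) ∧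
        (∀ a : ℝ, 0 < a → g a = 0 → ∃ ε > (0 : ℝ),
          StrictMonoOn g (Set.Ioo (a - ε) (a + ε))
            ∨ StrictAntiOn g (Set.Ioo (a - ε) (a + ε))) ∧
        (Splus Vs g).Finite ∧ (Sminus Vs g).Finite ∧
        (Splus Vs g).ncard ≠ (Sminus Vs g).ncard := by
  refine ⟨VV, AA, VV_contDiff, VV_zero, ?_, V_sub_tendsto, ?_, gg, fun z _ => gg_V z, ?_, ?_, ?_, ?_⟩
  · intro z _
    rw [VV_deriv]
    exact inv_pos.2 (hh_pos _)
  · intro n hn p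
    obtain ⟨m, rfl⟩ := Nat.exists_eq_add_of_le' hn
    obtain ⟨q, hq, he⟩ := iter_form m
    rw [he]
    exact hq.tendsto_V p
  · intro a _ h0
    have := gg_zero h0
    subst this
    exact ⟨1 / 2, by norm_num, Or.inr gg_anti⟩
  · rw [Splus_empty]; exact Set.finite_empty
  · rw [Sminus_eq]; exact Set.finite_singleton _
  · rw [Splus_empty, Sminus_eq]; simp
end
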